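/- Let p ∈ (0,1) be fixed and let m ≥ 5 be a fixed integer. Then there exist constants c₁ = c₁(p,m) > 0 and c₂ = c₂(p,m) > 0 such that with high probability n + c₁·n/ln n ≤ sat(G(n,p), C_m) ≤ n + c₂·n/ln n; that is, whp sat(G(n,p), C_m) = n + Θ(n/ln n). -/

import Mathlib

open MeasureTheory Filter Real

/-- The index type of potential edges of a graph on `Fin n`. -/
abbrev EdgeType (n : ℕ) := {e : Sym2 (Fin n) // ¬ e.IsDiag}

/-- The product Bernoulli measure on edge-indicator functions: the binomial
random graph `G(n,p)`. -/
noncomputable def erMeasure (n : ℕ) (p : ℝ) : Measure (EdgeType n → Bool) :=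
  Measure.pi fun _ => (PMF.bernoulli (min (Real.toNNReal p) 1) (min_le_right _ _)).toMeasure

/-- The simple graph determined by an edge-indicator function. -/
def graphOf {n : ℕ} (ω : EdgeType n → Bool) : SimpleGraph (Fin n) :=
  SimpleGraph.fromEdgeSet {e | ∃ h : ¬ e.IsDiag, ω ⟨e, h⟩ = true}

/-- `H` contains a (not necessarily induced) copy of `F`. -/
def ContainsCopy {α β : Type*} (F : SimpleGraph α) (H : SimpleGraph β) : Prop :=
  ∃ f : α → β, Function.Injective f ∧ ∀ ⦃a b⦄, F.Adj a b → H.Adj (f a) (f b)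

/-- `H` is `F`-saturated in `G`: `H` is a spanning subgraph of `G` that is `F`-free,
and adding any edge of `G` missing from `H` creates a copy of `F`. -/
def IsSaturatedIn {V : Type*} {α : Type*} (G H : SimpleGraph V) (F : SimpleGraph α) : Prop :=
  H ≤ G ∧ ¬ ContainsCopy F H ∧
    ∀ v w : V, G.Adj v w → ¬ H.Adj v w →
      ContainsCopy F (H ⊔ SimpleGraph.fromEdgeSet {s(v, w)})

/-- The saturation number `sat(G,F)`: the minimum number of edges of an
`F`-saturated spanning subgraph of `G`. -/
noncomputable def satNum {V α : Type*} (G : SimpleGraph V) (F : SimpleGraph α) : ℕ :=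
  sInf {k | ∃ H : SimpleGraph V, IsSaturatedIn G H F ∧ H.edgeSet.ncard = k}

/-- The cycle `C_m`, as a graph on `ZMod m`. -/
def cycGraph (m : ℕ) : SimpleGraph (ZMod m) :=
  SimpleGraph.fromRel (fun a b => a = b + 1)


section PathsAndCycles

/-- There is a simple path with exactly `L` edges from `x` to `y` in `H`. -/
def HasPath {V : Type*} (H : SimpleGraph V) (L : ℕ) (x y : V) : Prop :=
  ∃ q : ℕ → V, q 0 = x ∧ q L = y ∧ (∀ i < L, H.Adj (q i) (q (i + 1))) ∧
    (∀ i ≤ L, ∀ j ≤ L, q i = q j → i = j)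

theorem HasPath.symm {V : Type*} {H : SimpleGraph V} {L : ℕ} {x y : V}
    (h : HasPath H L x y) : HasPath H L y x := by
  obtain ⟨q, h0, hL, ha, hi⟩ := h
  refine ⟨fun i => q (L - i), by simpa using hL, by simpa using h0, ?_, ?_⟩
  · intro i hiL
    have := ha (L - (i + 1)) (by omega)
    have e : L - (i + 1) + 1 = L - i := by omega
    rw [e] at this
    exact this.symm
  · intro i hiL j hjL hq
    have := hi (L - i) (by omega) (L - j) (by omega) hq
    omega

theorem cyc_adj_succ (m : ℕ) (hm : 5 ≤ m) (a : ZMod m) : (cycGraph m).Adj a (a + 1) := by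
  have : Fact (1 < m) := ⟨by omega⟩
  simp [cycGraph, SimpleGraph.fromRel_adj]

theorem cyc_adj_cases (m : ℕ) (a b : ZMod m) (h : (cycGraph m).Adj a b) :
    b = a + 1 ∨ a = b + 1 := by
  simp only [cycGraph, SimpleGraph.fromRel_adj] at h
  tauto

theorem zmod_nat_inj (m : ℕ) {i j : ℕ} (hi : i < m) (hj : j < m)
    (h : (i : ZMod m) = (j : ZMod m)) : i = j := by
  rw [ZMod.natCast_eq_natCast_iff] at h
  exact Nat.ModEq.eq_of_lt_of_lt h hi hj

theorem containsCopy_of_succ {V : Type*} (m : ℕ) (H : SimpleGraph V) (f : ZMod m → V)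
    (hf : Function.Injective f) (h : ∀ a, H.Adj (f a) (f (a + 1))) :
    ContainsCopy (cycGraph m) H := by
  refine ⟨f, hf, ?_⟩
  intro a b hab
  rcases cyc_adj_cases m a b hab with rfl | rfl
  · exact h a
  · exact (h b).symm

theorem hasPath_of_copy {V : Type*} (m : ℕ) (hm : 5 ≤ m) (H : SimpleGraph V) (v w : V)
    (hH : ¬ ContainsCopy (cycGraph m) H)
    (hc : ContainsCopy (cycGraph m) (H ⊔ SimpleGraph.fromEdgeSet {s(v, w)})) :
    HasPath H (m - 1) v w := by
  obtain ⟨f, hf, hadj⟩ := hc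
  have : Fact (1 < m) := ⟨by omega⟩
  have : NeZero m := ⟨by omega⟩
  have key : ∃ a, ¬ H.Adj (f a) (f (a + 1)) := by
    by_contra hcon
    push Not at hcon
    exact hH (containsCopy_of_succ m H f hf hcon)
  obtain ⟨a, ha⟩ := key
  have hor : ∀ b, ¬ H.Adj (f b) (f (b + 1)) → s(f b, f (b + 1)) = s(v, w) := by
    intro b hb
    have := hadj (cyc_adj_succ m hm b)
    rw [SimpleGraph.sup_adj] at this
    rcases this with h | h
    · exact absurd h hb
    · rw [SimpleGraph.fromEdgeSet_adj] at h
      simpa using h.1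
  have two : (2 : ZMod m) ≠ 0 := by
    intro h
    have : ((2 : ℕ) : ZMod m) = ((0 : ℕ) : ZMod m) := by exact_mod_cast h
    have := zmod_nat_inj m (by omega) (by omega) this
    omega
  have hne : ∀ b, b ≠ a → H.Adj (f b) (f (b + 1)) := by
    intro b hb
    by_contra hcon
    have e := (hor b hcon).trans (hor a ha).symm
    rw [Sym2.eq_iff] at e
    rcases e with ⟨h1, _⟩ | ⟨h1, h2⟩
    · exact hb (hf h1)
    · have h1 := hf h1
      have h2 := hf h2
      apply two
      subst h1
      linear_combination h2
  have main : HasPath H (m - 1) (f (a + 1)) (f a) := by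
    refine ⟨fun i => f (a + 1 + i), by simp, ?_, ?_, ?_⟩
    · have : ((m - 1 : ℕ) : ZMod m) = -1 := by
        rw [Nat.cast_sub (by omega)]; simp
      change f (a + 1 + ((m - 1 : ℕ) : ZMod m)) = f a
      rw [this]; congr 1; ring
    · intro i hi
      have h := hne (a + 1 + i) (by
        intro h
        have : ((i + 1 : ℕ) : ZMod m) = ((0 : ℕ) : ZMod m) := by
          push_cast; linear_combination h
        have := zmod_nat_inj m (by omega) (by omega) this
        omega)
      have e : a + 1 + ((i + 1 : ℕ) : ZMod m) = a + 1 + i + 1 := by push_cast; ring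
      simp only [e]
      exact h
    · intro i hi j hj h
      have := hf h
      exact zmod_nat_inj m (by omega) (by omega) (by linear_combination this)
  have e := hor a ha
  rw [Sym2.eq_iff] at e
  rcases e with ⟨h1, h2⟩ | ⟨h1, h2⟩
  · rw [← h1, ← h2]; exact main.symm
  · rw [← h1, ← h2]; exact main

theorem copy_of_hasPath {V : Type*} (m : ℕ) (hm : 5 ≤ m) (H : SimpleGraph V) (x y : V)
    (h : HasPath H (m - 1) x y) :
    ContainsCopy (cycGraph m) (H ⊔ SimpleGraph.fromEdgeSet {s(x, y)}) := by
  have : Fact (1 < m) := ⟨by omega⟩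
  have : NeZero m := ⟨by omega⟩
  obtain ⟨q, h0, hL, ha, hi⟩ := h
  have hxy : x ≠ y := by
    intro h
    have := hi 0 (by omega) (m - 1) le_rfl (by rw [h0, hL, h])
    omega
  refine containsCopy_of_succ m _ (fun a => q a.val) ?_ ?_
  · intro a b hab
    have h1 := ZMod.val_lt a
    have h2 := ZMod.val_lt b
    exact ZMod.val_injective m (hi _ (by omega) _ (by omega) hab)
  · intro a
    have h1 := ZMod.val_lt a
    have hv : (a + 1).val = (a.val + 1) % m := by
      rw [ZMod.val_add, ZMod.val_one]
    simp only [hv]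
    by_cases hlt : a.val + 1 < m
    · rw [Nat.mod_eq_of_lt hlt, SimpleGraph.sup_adj]
      exact Or.inl (ha _ (by omega))
    · have e : a.val = m - 1 := by omega
      have e2 : (a.val + 1) % m = 0 := by
        rw [e, Nat.sub_add_cancel (by omega), Nat.mod_self]
      rw [e2, e, h0, hL, SimpleGraph.sup_adj, SimpleGraph.fromEdgeSet_adj]
      right
      exact ⟨by simp [Sym2.eq_swap], hxy.symm⟩

theorem containsCopy_mono {V α : Type*} {F : SimpleGraph α} {H H' : SimpleGraph V} (h : H ≤ H')
    (hc : ContainsCopy F H) : ContainsCopy F H' := by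
  obtain ⟨f, hf, ha⟩ := hc
  exact ⟨f, hf, fun a b hab => h (ha hab)⟩

/-- Greedy completion of an `F`-free graph to a saturated one. -/
theorem satNum_le_of_partial {V α : Type*} [Finite V] (G H0 : SimpleGraph V) (F : SimpleGraph α)
    (hle : H0 ≤ G) (hfree : ¬ ContainsCopy F H0) (bad : Set (Sym2 V))
    (hbad : ∀ v w, G.Adj v w → ¬ H0.Adj v w → s(v, w) ∉ bad →
      ContainsCopy F (H0 ⊔ SimpleGraph.fromEdgeSet {s(v, w)})) :
    satNum G F ≤ H0.edgeSet.ncard + bad.ncard := by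
  obtain ⟨H, ⟨⟨hH0, hHG, hHf⟩, hmax⟩⟩ :=
    (Set.toFinite {H : SimpleGraph V | H0 ≤ H ∧ H ≤ G ∧ ¬ ContainsCopy F H}).exists_maximal
      ⟨H0, le_rfl, hle, hfree⟩
  have hsat : IsSaturatedIn G H F := by
    refine ⟨hHG, hHf, ?_⟩
    intro v w hG hH
    by_contra hcon
    have hle' : H ⊔ SimpleGraph.fromEdgeSet {s(v, w)} ≤ H := by
      apply hmax
      · refine ⟨hH0.trans le_sup_left, ?_, hcon⟩
        apply sup_le hHG
        intro a b hab
        rw [SimpleGraph.fromEdgeSet_adj] at hab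
        have h1 : s(a, b) = s(v, w) := by simpa using hab.1
        rw [← SimpleGraph.mem_edgeSet, h1]
        exact hG
      · exact le_sup_left
    apply hH
    apply hle'
    rw [SimpleGraph.sup_adj, SimpleGraph.fromEdgeSet_adj]
    right
    exact ⟨rfl, hG.ne⟩
  have h1 : satNum G F ≤ H.edgeSet.ncard := Nat.sInf_le ⟨H, hsat, rfl⟩
  refine h1.trans ?_
  have h2 : H.edgeSet ⊆ H0.edgeSet ∪ bad := by
    intro e
    induction e with
    | _ v w =>
    intro he
    by_contra hcon
    simp only [Set.mem_union, not_or, SimpleGraph.mem_edgeSet] at hcon he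
    apply hHf
    refine containsCopy_mono ?_ (hbad v w (hHG he) hcon.1 hcon.2)
    apply sup_le hH0
    intro a b hab
    rw [SimpleGraph.fromEdgeSet_adj] at hab
    have h1 : s(a, b) = s(v, w) := by simpa using hab.1
    rw [← SimpleGraph.mem_edgeSet, h1]
    exact he
  exact (Set.ncard_le_ncard h2 (Set.toFinite _)).trans (Set.ncard_union_le _ _)

/-- A saturated subgraph always exists, so the saturation number is attained. -/
theorem satNum_attained {V α : Type*} [Finite V] (G : SimpleGraph V) (F : SimpleGraph α)
    (hfree : ¬ ContainsCopy F (⊥ : SimpleGraph V)) :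
    ∃ H : SimpleGraph V, IsSaturatedIn G H F ∧ H.edgeSet.ncard = satNum G F := by
  obtain ⟨H, ⟨⟨hHG, hHf⟩, hmax⟩⟩ :=
    (Set.toFinite {H : SimpleGraph V | H ≤ G ∧ ¬ ContainsCopy F H}).exists_maximal
      ⟨⊥, bot_le, hfree⟩
  have hsat : IsSaturatedIn G H F := by
    refine ⟨hHG, hHf, ?_⟩
    intro v w hG hH
    by_contra hcon
    have hle' : H ⊔ SimpleGraph.fromEdgeSet {s(v, w)} ≤ H := by
      apply hmax
      · refine ⟨?_, hcon⟩
        apply sup_le hHG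
        intro a b hab
        rw [SimpleGraph.fromEdgeSet_adj] at hab
        have h1 : s(a, b) = s(v, w) := by simpa using hab.1
        rw [← SimpleGraph.mem_edgeSet, h1]
        exact hG
      · exact le_sup_left
    apply hH
    apply hle'
    rw [SimpleGraph.sup_adj, SimpleGraph.fromEdgeSet_adj]
    right
    exact ⟨rfl, hG.ne⟩
  exact Nat.sInf_mem (s := {k | ∃ H : SimpleGraph V, IsSaturatedIn G H F ∧ H.edgeSet.ncard = k})
    ⟨_, H, hsat, rfl⟩

theorem bot_cycle_free {V : Type*} (m : ℕ) (hm : 5 ≤ m) :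
    ¬ ContainsCopy (cycGraph m) (⊥ : SimpleGraph V) := by
  rintro ⟨f, _, ha⟩
  exact ha (cyc_adj_succ m hm 0)

end PathsAndCycles


section Pendant

/-- Pendant-tree structure of a graph `H` around a set `S`: outside of `S` the only edges are
the ones from a vertex to its parent. -/
structure Pendant {V : Type*} (H : SimpleGraph V) where
  par : V → V
  S : Set V
  ht : V → ℕ
  rt : V → V
  closed : ∀ x, x ∈ S → par x ∈ S
  edge : ∀ x y, H.Adj x y → (x ∈ S ∧ y ∈ S) ∨ (x ∉ S ∧ y = par x) ∨ (y ∉ S ∧ x = par y)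
  inS : ∀ x, x ∈ S → ht x = 0 ∧ rt x = x
  outS : ∀ x, x ∉ S → ht x = ht (par x) + 1 ∧ rt x = rt (par x)

variable {V : Type*} {H : SimpleGraph V} (P : Pendant H)

theorem Pendant.rt_of_edge {x y : V} (h : H.Adj x y) (hne : P.rt x ≠ P.rt y) :
    x ∈ P.S ∧ y ∈ P.S := by
  rcases P.edge x y h with h | ⟨h1, h2⟩ | ⟨h1, h2⟩
  · exact h
  · exact absurd (by rw [(P.outS x h1).2, h2]) hne
  · exact absurd (by rw [(P.outS y h1).2, h2]) hne

theorem Pendant.ht_of_edge {x y : V} (h : H.Adj x y) : P.ht y ≤ P.ht x + 1 := by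
  rcases P.edge x y h with ⟨h1, h2⟩ | ⟨h1, h2⟩ | ⟨h1, h2⟩
  · rw [(P.inS y h2).1]; omega
  · rw [(P.outS x h1).1, h2]; omega
  · rw [(P.outS y h1).1, h2]

/-- Two adjacent vertices of the same pendant tree have heights of different parity. -/
theorem Pendant.parity_of_edge {x y : V} (h : H.Adj x y) (hr : P.rt x = P.rt y) :
    (P.ht x + P.ht y) % 2 = 1 := by
  rcases P.edge x y h with ⟨h1, h2⟩ | ⟨h1, h2⟩ | ⟨h1, h2⟩
  · rw [(P.inS x h1).2, (P.inS y h2).2] at hr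
    exact absurd hr h.ne
  · rw [(P.outS x h1).1, h2]; omega
  · rw [(P.outS y h1).1, h2]; omega

/-- Once a simple path steps down outside of `S`, it keeps going down. -/
theorem Pendant.down (L : ℕ) (q : ℕ → V) (ha : ∀ i < L, H.Adj (q i) (q (i + 1)))
    (hi : ∀ i ≤ L, ∀ j ≤ L, q i = q j → i = j) (h1 : 1 ≤ L) (hS : q 1 ∉ P.S)
    (hp : q 0 = P.par (q 1)) :
    ∀ j, j < L → q (j + 1) ∉ P.S ∧ q j = P.par (q (j + 1)) ∧ P.ht (q (j + 1)) = P.ht (q 0) + (j + 1)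
      ∧ P.rt (q (j + 1)) = P.rt (q 0) := by
  intro j
  induction j with
  | zero =>
    intro _
    refine ⟨hS, hp, ?_, ?_⟩
    · rw [(P.outS _ hS).1, ← hp]
    · rw [(P.outS _ hS).2, ← hp]
  | succ j ih =>
    intro hj
    obtain ⟨i1, i2, i3, i4⟩ := ih (by omega)
    rcases P.edge _ _ (ha (j + 1) hj) with ⟨a1, _⟩ | ⟨_, a2⟩ | ⟨a1, a2⟩
    · exact absurd a1 i1
    · have := hi (j + 1 + 1) (by omega) j (by omega) (by rw [a2, i2])
      omega
    · refine ⟨a1, a2, ?_, ?_⟩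
      · rw [(P.outS _ a1).1, ← a2, i3]; omega
      · rw [(P.outS _ a1).2, ← a2, i4]

theorem shift_adj {L : ℕ} {q : ℕ → V} (ha : ∀ i < L + 1, H.Adj (q i) (q (i + 1))) :
    ∀ i < L, H.Adj (q (i + 1)) (q (i + 1 + 1)) := fun i hi => ha (i + 1) (by omega)

theorem shift_inj {L : ℕ} {q : ℕ → V} (hi : ∀ i ≤ L + 1, ∀ j ≤ L + 1, q i = q j → i = j) :
    ∀ i ≤ L, ∀ j ≤ L, q (i + 1) = q (j + 1) → i = j := fun i h j h' e => by
  have := hi (i + 1) (by omega) (j + 1) (by omega) e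
  omega

/-- A simple path that starts in `S` visits the root of its last vertex. -/
theorem Pendant.visits (L : ℕ) : ∀ (q : ℕ → V), (∀ i < L, H.Adj (q i) (q (i + 1))) →
    (∀ i ≤ L, ∀ j ≤ L, q i = q j → i = j) → q 0 ∈ P.S → ∃ i ≤ L, q i = P.rt (q L) := by
  induction L with
  | zero =>
    intro q _ _ h
    exact ⟨0, le_rfl, (P.inS _ h).2.symm⟩
  | succ L ih =>
    intro q ha hi h0
    rcases P.edge _ _ (ha 0 (by omega)) with ⟨_, a2⟩ | ⟨a1, _⟩ | ⟨a1, a2⟩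
    · obtain ⟨i, hiL, e⟩ := ih (fun i => q (i + 1)) (shift_adj ha) (shift_inj hi) a2
      exact ⟨i + 1, by omega, e⟩
    · exact absurd h0 a1
    · have := P.down (L + 1) q ha hi (by omega) a1 a2 L (by omega)
      exact ⟨0, by omega, by rw [this.2.2.2, (P.inS _ h0).2]⟩

theorem Pendant.same_tree (L : ℕ) : ∀ (q : ℕ → V), (∀ i < L, H.Adj (q i) (q (i + 1))) →
    (∀ i ≤ L, ∀ j ≤ L, q i = q j → i = j) → P.rt (q 0) = P.rt (q L) →
    L ≤ P.ht (q 0) + P.ht (q L) ∧ L % 2 = (P.ht (q 0) + P.ht (q L)) % 2 := by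
  induction L with
  | zero => intro q _ _ _; omega
  | succ L ih =>
    intro q ha hi hr
    rcases P.edge _ _ (ha 0 (by omega)) with ⟨a1, a2⟩ | ⟨a1, a2⟩ | ⟨a1, a2⟩
    · obtain ⟨i, hiL, e⟩ := P.visits L (fun i => q (i + 1)) (shift_adj ha) (shift_inj hi) a2
      rw [← hr, (P.inS _ a1).2] at e
      have := hi (i + 1) (by omega) 0 (by omega) e
      omega
    · have b := P.outS _ a1
      rw [← a2] at b
      have := ih (fun i => q (i + 1)) (shift_adj ha) (shift_inj hi) (by
        simpa [← b.2] using hr)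
      simp only [zero_add] at *
      omega
    · have := P.down (L + 1) q ha hi (by omega) a1 a2 L (by omega)
      omega

theorem Pendant.lip (L : ℕ) : ∀ (q : ℕ → V), (∀ i < L, H.Adj (q i) (q (i + 1))) →
    P.ht (q L) ≤ P.ht (q 0) + L := by
  induction L with
  | zero => intro q _; simp
  | succ L ih =>
    intro q ha
    have h1 := ih q (fun i hi => ha i (by omega))
    have h2 := P.ht_of_edge (ha L (by omega))
    omega

theorem Pendant.diff_tree (L : ℕ) : ∀ (q : ℕ → V), (∀ i < L, H.Adj (q i) (q (i + 1))) →
    P.rt (q 0) ≠ P.rt (q L) → P.ht (q 0) + P.ht (q L) + 1 ≤ L := by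
  induction L with
  | zero => intro q _ h; exact absurd rfl h
  | succ L ih =>
    intro q ha hne
    have hs := shift_adj ha
    by_cases h01 : P.rt (q 0) = P.rt (q 1)
    · have h1 := ih (fun i => q (i + 1)) hs (by simpa [← h01] using hne)
      have h2 := P.ht_of_edge (ha 0 (by omega)).symm
      simp only [zero_add] at *
      omega
    · obtain ⟨a1, a2⟩ := P.rt_of_edge (ha 0 (by omega)) h01
      have h1 := P.lip L (fun i => q (i + 1)) hs
      simp only [zero_add] at *
      rw [(P.inS _ a1).1]
      rw [(P.inS _ a2).1] at h1
      omega

theorem Pendant.siblings {L : ℕ} {x y : V} (hx : x ∉ P.S) (hy : y ∉ P.S) (hne : x ≠ y)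
    (hp : P.par x = P.par y) (h : HasPath H L x y) : L = 2 := by
  have hh : P.ht x = P.ht y := by rw [(P.outS x hx).1, (P.outS y hy).1, hp]
  have first : ∀ x y, x ∉ P.S → P.ht x = P.ht y → x ≠ y → ∀ q : ℕ → V,
      q 0 = x → q L = y → (∀ i < L, H.Adj (q i) (q (i + 1))) →
      (∀ i ≤ L, ∀ j ≤ L, q i = q j → i = j) → 1 ≤ L ∧ q 1 = P.par x := by
    intro x y hx hh hne q h0 hL ha hi
    have hL1 : 1 ≤ L := by
      by_contra hcon
      have : L = 0 := by omega
      subst this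
      exact hne (h0.symm.trans hL)
    refine ⟨hL1, ?_⟩
    rcases P.edge _ _ (ha 0 (by omega)) with ⟨a1, a2⟩ | ⟨a1, a2⟩ | ⟨a1, a2⟩
    · exact absurd (h0 ▸ a1) hx
    · rw [← h0]; exact a2
    · have := (P.down L q ha hi hL1 a1 a2 (L - 1) (by omega)).2.2.1
      rw [Nat.sub_add_cancel hL1, h0, hL] at this
      omega
  obtain ⟨q, h0, hL, ha, hi⟩ := h
  obtain ⟨l1, e1⟩ := first x y hx hh hne q h0 hL ha hi
  obtain ⟨_, e2⟩ := first y x hy hh.symm hne.symm (fun i => q (L - i)) (by simpa using hL)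
    (by simpa using h0) (by
      intro i hiL
      have := ha (L - (i + 1)) (by omega)
      have e : L - (i + 1) + 1 = L - i := by omega
      rw [e] at this
      exact this.symm) (by
      intro i hiL j hjL hq
      have := hi (L - i) (by omega) (L - j) (by omega) hq
      omega)
  have := hi 1 l1 (L - 1) (by omega) (by rw [e1, hp]; exact e2.symm)
  omega

theorem Pendant.hasPath_same {L : ℕ} {x y : V} (h : HasPath H L x y) (hr : P.rt x = P.rt y) :
    L ≤ P.ht x + P.ht y ∧ L % 2 = (P.ht x + P.ht y) % 2 := by
  obtain ⟨q, rfl, rfl, ha, hi⟩ := h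
  exact P.same_tree L q ha hi hr

theorem Pendant.hasPath_diff {L : ℕ} {x y : V} (h : HasPath H L x y) (hr : P.rt x ≠ P.rt y) :
    P.ht x + P.ht y + 1 ≤ L := by
  obtain ⟨q, rfl, rfl, ha, hi⟩ := h
  exact P.diff_tree L q ha hr

end Pendant


section Sizes
open Classical

/-- Any two disjoint sets of at least `s` vertices are joined by an edge. -/
def NoHole {V : Type*} (G : SimpleGraph V) (s : ℕ) : Prop :=
  ∀ A B : Finset V, Disjoint A B → s ≤ A.card → s ≤ B.card → ∃ a ∈ A, ∃ b ∈ B, G.Adj a b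

variable {V : Type*} [Fintype V] {G H : SimpleGraph V} {s : ℕ}

theorem indep_lt (hG : NoHole G s) (hs : 1 ≤ s) (Y : Finset V)
    (hY : ∀ x ∈ Y, ∀ y ∈ Y, ¬ G.Adj x y) : Y.card < 2 * s := by
  by_contra hcon
  push Not at hcon
  obtain ⟨A, hA, hAc⟩ := Finset.exists_subset_card_eq (s := Y) (n := s) (by omega)
  obtain ⟨a, ha, b, hb, hab⟩ := hG A (Y \ A) Finset.disjoint_sdiff (by omega)
    (by rw [Finset.card_sdiff_of_subset hA]; omega)
  exact hY a (hA ha) b (Finset.mem_sdiff.1 hb).1 hab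

/-- If there are no edges between different classes, one class is nearly everything. -/
theorem big_class (hG : NoHole G s) (X : Finset V) (hX : 2 * s ≤ X.card) (f : V → V)
    (hf : ∀ x ∈ X, ∀ y ∈ X, G.Adj x y → f x = f y) :
    ∃ v, X.card < (X.filter (fun x => f x = v)).card + 2 * s := by
  let e := Fintype.equivFin V
  let g : V → ℕ := fun x => (e (f x) : ℕ)
  have hg : ∀ x y, g x = g y → f x = f y := fun x y h => e.injective (Fin.ext h)
  let A : ℕ → Finset V := fun t => X.filter (fun x => g x < t)
  have hex : ∃ t, s ≤ (A t).card := by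
    refine ⟨Fintype.card V, ?_⟩
    have : A (Fintype.card V) = X := by
      apply Finset.filter_true_of_mem
      intro x _
      exact (e (f x)).2
    rw [this]; omega
  let t := Nat.find hex
  have ht : s ≤ (A t).card := Nat.find_spec hex
  by_cases hs0 : s = 0
  · subst hs0
    obtain rfl | ⟨x, hx⟩ := X.eq_empty_or_nonempty
    · exfalso
      obtain ⟨a, ha, _⟩ := hG ∅ ∅ (by simp) (by simp) (by simp)
      simp at ha
    · exfalso
      obtain ⟨a, ha, _⟩ := hG ∅ ∅ (by simp) (by simp) (by simp)
      simp at ha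
  have ht0 : t ≠ 0 := by
    intro h0
    rw [h0] at ht
    simp only [A, Nat.not_lt_zero, Finset.filter_false, Finset.card_empty] at ht
    omega
  have hmin : (A (t - 1)).card < s := by
    have := Nat.find_min hex (m := t - 1) (by omega)
    omega
  have hrest : (X \ A t).card < s := by
    by_contra hcon
    push Not at hcon
    obtain ⟨a, ha, b, hb, hab⟩ := hG (A t) (X \ A t) Finset.disjoint_sdiff ht hcon
    simp only [A, Finset.mem_sdiff, Finset.mem_filter, not_and] at ha hb
    have := hf a ha.1 b hb.1 hab
    have h2 := hb.2 hb.1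
    have h3 : g a = g b := by simp only [g, this]
    omega
  have hsub : X ⊆ X.filter (fun x => g x = t - 1) ∪ (A (t - 1) ∪ X \ A t) := by
    intro x hx
    simp only [A, Finset.mem_union, Finset.mem_filter, Finset.mem_sdiff, hx, true_and]
    omega
  have hcard := (Finset.card_le_card hsub).trans (Finset.card_union_le _ _)
  have hcard2 := Finset.card_union_le (A (t - 1)) (X \ A t)
  obtain hem | ⟨x0, hx0⟩ := (X.filter (fun x => g x = t - 1)).eq_empty_or_nonempty
  · rw [hem, Finset.card_empty] at hcard
    omega
  · refine ⟨f x0, ?_⟩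
    have : X.filter (fun x => g x = t - 1) ⊆ X.filter (fun x => f x = f x0) := by
      intro x hx
      simp only [Finset.mem_filter] at hx hx0 ⊢
      exact ⟨hx.1, hg _ _ (by omega)⟩
    have := Finset.card_le_card this
    omega

variable (P : Pendant H) (L : ℕ)

theorem low_tree (hG : NoHole G s) (hs : 1 ≤ s)
    (hsat : ∀ x y, G.Adj x y → H.Adj x y ∨ HasPath H L x y) (v : V) :
    (Finset.univ.filter (fun x => P.rt x = v ∧ 2 * P.ht x < L)).card ≤ 4 * s := by
  have key : ∀ i : ℕ, (Finset.univ.filter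
      (fun x => (P.rt x = v ∧ 2 * P.ht x < L) ∧ P.ht x % 2 = i)).card < 2 * s := by
    intro i
    apply indep_lt hG hs
    intro x hx y hy hxy
    simp only [Finset.mem_filter, Finset.mem_univ, true_and] at hx hy
    have hr : P.rt x = P.rt y := by rw [hx.1.1, hy.1.1]
    rcases hsat x y hxy with h | h
    · have := P.parity_of_edge h hr
      omega
    · have := P.hasPath_same h hr
      omega
  have hsub : (Finset.univ.filter (fun x => P.rt x = v ∧ 2 * P.ht x < L)) ⊆
      (Finset.univ.filter (fun x => (P.rt x = v ∧ 2 * P.ht x < L) ∧ P.ht x % 2 = 0)) ∪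
      (Finset.univ.filter (fun x => (P.rt x = v ∧ 2 * P.ht x < L) ∧ P.ht x % 2 = 1)) := by
    intro x hx
    simp only [Finset.mem_union, Finset.mem_filter, Finset.mem_univ, true_and] at hx ⊢
    have := Nat.mod_two_eq_zero_or_one (P.ht x)
    tauto
  have := (Finset.card_le_card hsub).trans (Finset.card_union_le _ _)
  have h0 := key 0
  have h1 := key 1
  omega

/-- A single pendant tree has at most `O(s^2)` vertices. -/
theorem whole_tree (hG : NoHole G s) (hs : 1 ≤ s) (hL : 3 ≤ L)
    (hsat : ∀ x y, G.Adj x y → H.Adj x y ∨ HasPath H L x y) (v : V) :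
    (Finset.univ.filter (fun x => P.rt x = v)).card ≤ 8 * s * s + 4 * s + 1 := by
  let Q : ℕ → Finset V := fun i => Finset.univ.filter (fun x => P.rt x = v ∧ P.ht x % 2 = i)
  have hQ : ∀ i x, x ∈ Q i ↔ P.rt x = v ∧ P.ht x % 2 = i := by intro i x; simp [Q]
  have hsub : (Finset.univ.filter (fun x => P.rt x = v)) ⊆ Q 0 ∪ Q 1 := by
    intro x hx
    simp only [Finset.mem_union, hQ, Finset.mem_filter, Finset.mem_univ, true_and] at hx ⊢
    have := Nat.mod_two_eq_zero_or_one (P.ht x)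
    tauto
  have hcard := (Finset.card_le_card hsub).trans (Finset.card_union_le _ _)
  by_cases hpar : L % 2 = 1
  · have key : ∀ i, (Q i).card < 2 * s := by
      intro i
      apply indep_lt hG hs
      intro x hx y hy hxy
      rw [hQ] at hx hy
      have hr : P.rt x = P.rt y := by rw [hx.1, hy.1]
      rcases hsat x y hxy with h | h
      · have := P.parity_of_edge h hr
        omega
      · have := P.hasPath_same h hr
        omega
    have h0 := key 0
    have h1 := key 1
    nlinarith
  · -- edges between the two parity classes are parent edges
    have hcross : ∀ x y, x ∈ Q 0 → y ∈ Q 1 → G.Adj x y → x = P.par y ∨ y = P.par x := by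
      intro x y hx hy hxy
      rw [hQ] at hx hy
      have hr : P.rt x = P.rt y := by rw [hx.1, hy.1]
      rcases hsat x y hxy with h | h
      · rcases P.edge x y h with ⟨h1, h2⟩ | ⟨h1, h2⟩ | ⟨h1, h2⟩
        · rw [(P.inS x h1).2, (P.inS y h2).2] at hr
          exact absurd hr h.ne
        · exact Or.inr h2
        · exact Or.inl h2
      · have := P.hasPath_same h hr
        omega
    have hsmall : (Q 0).card < 4 * s ∨ (Q 1).card < 4 * s := by
      by_contra hcon
      push Not at hcon
      obtain ⟨B, hB, hBc⟩ := Finset.exists_subset_card_eq (s := Q 1) (n := 2 * s) (by omega)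
      obtain ⟨B1, hB1, hB1c⟩ := Finset.exists_subset_card_eq (s := B) (n := s) (by omega)
      let B2 := B \ B1
      have hB2c : B2.card = s := by
        simp only [B2]; rw [Finset.card_sdiff_of_subset hB1]; omega
      let A := Q 0 \ B.image P.par
      have hAc : 2 * s ≤ A.card := by
        have h1 := Finset.le_card_sdiff (B.image P.par) (Q 0)
        have h2 : (B.image P.par).card ≤ B.card := Finset.card_image_le
        simp only [A]; omega
      have hAsub : A ⊆ A.filter (fun x => P.par x ∉ B1) ∪ A.filter (fun x => P.par x ∉ B2) := by
        intro x hx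
        simp only [Finset.mem_union, Finset.mem_filter, hx, true_and, B2, Finset.mem_sdiff]
        tauto
      have hc2 := (Finset.card_le_card hAsub).trans (Finset.card_union_le _ _)
      have fin : ∀ B' ⊆ B, B'.card = s → ¬ s ≤ (A.filter (fun x => P.par x ∉ B')).card := by
        intro B' hB' hc hge
        have hdis : Disjoint (A.filter (fun x => P.par x ∉ B')) B' := by
          rw [Finset.disjoint_left]
          intro x hx hxB
          have h1 := (hQ 1 x).1 (hB (hB' hxB))
          simp only [A, Finset.mem_filter, Finset.mem_sdiff, hQ] at hx
          omega
        obtain ⟨a, ha, b, hb, hab⟩ := hG _ B' hdis hge (by omega)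
        simp only [A, Finset.mem_filter, Finset.mem_sdiff] at ha
        rcases hcross a b ha.1.1 (hB (hB' hb)) hab with h | h
        · exact ha.1.2 (Finset.mem_image.2 ⟨b, hB' hb, h.symm⟩)
        · exact ha.2 (h ▸ hb)
      have f1 := fin B1 hB1 hB1c
      have f2 := fin B2 Finset.sdiff_subset hB2c
      omega
    have other : ∀ i j, (i + j = 1) → (Q i).card < 4 * s → (Q j).card ≤ 8 * s * s + 1 := by
      intro i j hij hi
      have hfib : ∀ w, ((Q j \ {v}).filter (fun x => P.par x = w)).card ≤ 2 * s := by
        intro w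
        apply le_of_lt
        apply indep_lt hG hs
        intro x hx y hy hxy
        simp only [Finset.mem_filter, Finset.mem_sdiff, hQ, Finset.mem_singleton] at hx hy
        have nS : ∀ z, P.rt z = v → z ≠ v → z ∉ P.S := by
          intro z h1 h2 h3
          exact h2 ((P.inS z h3).2.symm.trans h1)
        have hr : P.rt x = P.rt y := by rw [hx.1.1.1, hy.1.1.1]
        rcases hsat x y hxy with h | h
        · have := P.parity_of_edge h hr
          omega
        · have := P.siblings (nS x hx.1.1.1 hx.1.2) (nS y hy.1.1.1 hy.1.2) hxy.ne
            (hx.2.trans hy.2.symm) h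
          omega
      have hmaps : ∀ x ∈ Q j \ {v}, P.par x ∈ Q i := by
        intro x hx
        simp only [Finset.mem_sdiff, hQ, Finset.mem_singleton] at hx
        have hxS : x ∉ P.S := fun h3 => hx.2 ((P.inS x h3).2.symm.trans hx.1.1)
        have := P.outS x hxS
        rw [hQ]
        refine ⟨by rw [← this.2]; exact hx.1.1, by omega⟩
      have h1 := Finset.card_le_mul_card_image_of_maps_to hmaps (2 * s) (fun w _ => hfib w)
      have h2 : (Q j).card ≤ (Q j \ {v}).card + 1 := by
        have := Finset.le_card_sdiff {v} (Q j)
        rw [Finset.card_singleton] at this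
        omega
      nlinarith
    rcases hsmall with h | h
    · have := other 0 1 rfl h
      omega
    · have := other 1 0 rfl h
      omega

theorem deep_bound (hG : NoHole G s) (hs : 1 ≤ s) (hL : 3 ≤ L)
    (hsat : ∀ x y, G.Adj x y → H.Adj x y ∨ HasPath H L x y) :
    (Finset.univ.filter (fun x => L ≤ 2 * P.ht x)).card ≤ 8 * s * s + 6 * s + 1 := by
  by_contra hcon
  push Not at hcon
  obtain ⟨v, hv⟩ := big_class hG (Finset.univ.filter (fun x => L ≤ 2 * P.ht x)) (by nlinarith)
    P.rt (by
      intro x hx y hy hxy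
      simp only [Finset.mem_filter, Finset.mem_univ, true_and] at hx hy
      by_contra hne
      rcases hsat x y hxy with h | h
      · have := P.rt_of_edge h hne
        have := P.inS x this.1
        omega
      · have := P.hasPath_diff h hne
        omega)
  have h1 := whole_tree P L hG hs hL hsat v
  have h2 : ((Finset.univ.filter (fun x => L ≤ 2 * P.ht x)).filter (fun x => P.rt x = v)).card ≤
      (Finset.univ.filter (fun x => P.rt x = v)).card := by
    apply Finset.card_le_card
    intro x hx
    simp only [Finset.mem_filter, Finset.mem_univ, true_and] at hx ⊢
    exact hx.2
  omega

/-- The core is large. -/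
theorem core_large (hG : NoHole G s) (hs : 1 ≤ s) (hL : 3 ≤ L)
    (hsat : ∀ x y, G.Adj x y → H.Adj x y ∨ HasPath H L x y) (hrt : ∀ x, P.rt x ∈ P.S) :
    Fintype.card V ≤ 4 * s * (Finset.univ.filter (fun x => x ∈ P.S)).card +
      (8 * s * s + 6 * s + 1) := by
  have h1 := deep_bound P L hG hs hL hsat
  have h2 : (Finset.univ.filter (fun x => 2 * P.ht x < L)).card ≤
      4 * s * (Finset.univ.filter (fun x => x ∈ P.S)).card := by
    apply Finset.card_le_mul_card_image_of_maps_to (f := P.rt)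
    · intro x _
      simpa using hrt x
    · intro v _
      have := low_tree P L hG hs hsat v
      convert this using 2
      ext x
      simp [and_comm]
  have h3 : (Finset.univ : Finset V) ⊆ (Finset.univ.filter (fun x => 2 * P.ht x < L)) ∪
      (Finset.univ.filter (fun x => L ≤ 2 * P.ht x)) := by
    intro x _
    simp only [Finset.mem_union, Finset.mem_filter, Finset.mem_univ, true_and]
    omega
  have h4 := (Finset.card_le_card h3).trans (Finset.card_union_le _ _)
  rw [Finset.card_univ] at h4
  omega

end Sizes


section Core
open Classical

/-- A rooted spanning tree of `H` (given by a parent map) together with a set `U` which contains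
the root and all the ends of the edges outside of the tree. -/
structure RT {V : Type*} (H : SimpleGraph V) where
  par : V → V
  r : V
  U : Finset V
  d : V → ℕ
  hr : r ∈ U
  par_r : par r = r
  hd : ∀ x, x ≠ r → d (par x) < d x
  hedge : ∀ x y, H.Adj x y → y = par x ∨ x = par y ∨ (x ∈ U ∧ y ∈ U)

variable {V : Type*} {H : SimpleGraph V}

theorem exists_RT [Fintype V] (hH : H.Connected) :
    ∃ T : RT H, T.U.card + 2 * Fintype.card V ≤ 2 * H.edgeSet.ncard + 3 := by
  obtain ⟨r⟩ := hH.nonempty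
  have hpar : ∀ x, ∃ y, (x = r → y = r) ∧ (x ≠ r → H.Adj x y ∧ H.dist y r < H.dist x r) := by
    intro x
    by_cases hx : x = r
    · exact ⟨r, fun _ => rfl, fun h => absurd hx h⟩
    · obtain ⟨w, hw⟩ := (hH x r).exists_walk_length_eq_dist
      cases w with
      | nil => exact absurd rfl hx
      | @cons _ y _ h w =>
        refine ⟨y, fun h => absurd h hx, fun _ => ⟨h, ?_⟩⟩
        have := SimpleGraph.dist_le w
        rw [SimpleGraph.Walk.length_cons] at hw
        omega
  choose par hpar1 hpar2 using hpar
  let E0 : Finset (Sym2 V) := (Finset.univ.erase r).image (fun x => s(x, par x))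
  have hE0c : E0.card = Fintype.card V - 1 := by
    rw [Finset.card_image_of_injOn, Finset.card_erase_of_mem (Finset.mem_univ _), Finset.card_univ]
    intro x hx y hy hxy
    have hx' : x ≠ r := by simpa using hx
    have hy' : y ≠ r := by simpa using hy
    simp only [Sym2.eq_iff] at hxy
    rcases hxy with h | ⟨h1, h2⟩
    · exact h.1
    · have a1 := (hpar2 x hx').2
      have a2 := (hpar2 y hy').2
      rw [h2] at a1
      rw [← h1] at a2
      omega
  have hE0sub : E0 ⊆ H.edgeFinset := by
    intro e he
    simp only [E0, Finset.mem_image, Finset.mem_erase, Finset.mem_univ, and_true] at he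
    obtain ⟨x, hx, rfl⟩ := he
    rw [SimpleGraph.mem_edgeFinset]
    exact (hpar2 x hx).1
  let E1 := H.edgeFinset \ E0
  have hE1c : E1.card + (Fintype.card V - 1) = H.edgeSet.ncard := by
    rw [← hE0c, Finset.card_sdiff_of_subset hE0sub,
      Nat.sub_add_cancel (Finset.card_le_card hE0sub), Set.ncard_eq_toFinset_card']
    rfl
  let U : Finset V := insert r (E1.biUnion Sym2.toFinset)
  have hUc : U.card ≤ 2 * E1.card + 1 := by
    refine (Finset.card_insert_le _ _).trans ?_
    have : (E1.biUnion Sym2.toFinset).card ≤ E1.card * 2 := by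
      apply Finset.card_biUnion_le_card_mul
      intro e _
      by_cases he : e.IsDiag
      · rw [Sym2.card_toFinset_of_isDiag e he]; omega
      · rw [Sym2.card_toFinset_of_not_isDiag e he]
    omega
  refine ⟨⟨par, r, U, fun x => H.dist x r, by simp [U], hpar1 r rfl, fun x hx => (hpar2 x hx).2,
    ?_⟩, ?_⟩
  · intro x y hxy
    by_cases hmem : s(x, y) ∈ E0
    · simp only [E0, Finset.mem_image, Finset.mem_erase, Finset.mem_univ, and_true] at hmem
      obtain ⟨z, hz, e⟩ := hmem
      rw [Sym2.eq_iff] at e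
      rcases e with ⟨rfl, rfl⟩ | ⟨rfl, rfl⟩
      · exact Or.inl rfl
      · exact Or.inr (Or.inl rfl)
    · right; right
      have h1 : s(x, y) ∈ E1 := by
        simp only [E1, Finset.mem_sdiff, SimpleGraph.mem_edgeFinset]
        exact ⟨hxy, hmem⟩
      simp only [U, Finset.mem_insert, Finset.mem_biUnion]
      exact ⟨Or.inr ⟨_, h1, by simp⟩, Or.inr ⟨_, h1, by simp⟩⟩
  · have : 0 < Fintype.card V := Fintype.card_pos_iff.2 ⟨r⟩
    simp only
    omega

variable (T : RT H)

/-- The core: all ancestors of vertices of `U`. -/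
def RT.S : Set V := {x | ∃ u ∈ T.U, ∃ i : ℕ, T.par^[i] u = x}

theorem RT.U_sub {x : V} (h : x ∈ T.U) : x ∈ T.S := ⟨x, h, 0, rfl⟩

theorem RT.S_closed {x : V} (h : x ∈ T.S) : T.par x ∈ T.S := by
  obtain ⟨u, hu, i, rfl⟩ := h
  exact ⟨u, hu, i + 1, Function.iterate_succ_apply' _ _ _⟩

theorem RT.S_iter {x : V} (h : x ∈ T.S) (i : ℕ) : T.par^[i] x ∈ T.S := by
  induction i with
  | zero => exact h
  | succ i ih => rw [Function.iterate_succ_apply']; exact T.S_closed ih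

theorem RT.reach (x : V) : ∃ i : ℕ, T.par^[i] x ∈ T.S := by
  induction hn : T.d x using Nat.strong_induction_on generalizing x with
  | _ n ih =>
    by_cases hx : x = T.r
    · exact ⟨0, by rw [hx]; exact T.U_sub T.hr⟩
    · obtain ⟨i, hi⟩ := ih (T.d (T.par x)) (by rw [← hn]; exact T.hd x hx) (T.par x) rfl
      exact ⟨i + 1, hi⟩

noncomputable def RT.ht (x : V) : ℕ := Nat.find (T.reach x)

theorem RT.ht_in {x : V} (h : x ∈ T.S) : T.ht x = 0 := by
  rw [RT.ht, Nat.find_eq_zero]; exact h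

theorem RT.ht_out {x : V} (h : x ∉ T.S) : T.ht x = T.ht (T.par x) + 1 := by
  rw [RT.ht, RT.ht]
  exact Nat.find_comp_succ (T.reach x) (T.reach (T.par x)) h

noncomputable def RT.pendant : Pendant H where
  par := T.par
  S := T.S
  ht := T.ht
  rt := fun x => T.par^[T.ht x] x
  closed := fun _ h => T.S_closed h
  edge := by
    intro x y h
    rcases T.hedge x y h with rfl | rfl | ⟨h1, h2⟩
    · by_cases hx : x ∈ T.S
      · exact Or.inl ⟨hx, T.S_closed hx⟩
      · exact Or.inr (Or.inl ⟨hx, rfl⟩)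
    · by_cases hx : y ∈ T.S
      · exact Or.inl ⟨T.S_closed hx, hx⟩
      · exact Or.inr (Or.inr ⟨hx, rfl⟩)
    · exact Or.inl ⟨T.U_sub h1, T.U_sub h2⟩
  inS := by
    intro x h
    refine ⟨T.ht_in h, ?_⟩
    simp only [T.ht_in h, Function.iterate_zero, id]
  outS := by
    intro x h
    refine ⟨T.ht_out h, ?_⟩
    simp only [T.ht_out h, Function.iterate_succ_apply]

theorem RT.pendant_rt (x : V) : T.pendant.rt x ∈ T.pendant.S := Nat.find_spec (T.reach x)

variable [Fintype V]

noncomputable def RT.SF : Finset V := Finset.univ.filter (fun x => x ∈ T.S)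

/-- Children inside of the core. -/
noncomputable def RT.ch (v : V) : Finset V := (T.SF.erase T.r).filter (fun t => T.par t = v)

/-- Branching vertices. -/
noncomputable def RT.Br : Finset V := T.SF.filter (fun v => 2 ≤ (T.ch v).card)

noncomputable def RT.W : Finset V := T.U ∪ T.Br

theorem RT.mem_SF {x : V} : x ∈ T.SF ↔ x ∈ T.S := by simp [RT.SF]

theorem RT.r_mem : T.r ∈ T.SF := T.mem_SF.2 (T.U_sub T.hr)

theorem RT.sum_ch : ∑ v ∈ T.SF, (T.ch v).card = T.SF.card - 1 := by
  rw [← Finset.card_erase_of_mem T.r_mem]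
  symm
  apply Finset.card_eq_sum_card_fiberwise
  intro x hx
  have hx' : x ∈ T.SF.erase T.r := hx
  simp only [Finset.mem_erase, T.mem_SF] at hx'
  exact T.mem_SF.2 (T.S_closed hx'.2)

theorem RT.ch_pos {v : V} (hv : v ∈ T.S) (hU : v ∉ T.U) : 1 ≤ (T.ch v).card := by
  obtain ⟨u, hu, i, rfl⟩ := hv
  cases i with
  | zero => exact absurd hu hU
  | succ i =>
    rw [Nat.succ_le_iff, Finset.card_pos]
    refine ⟨T.par^[i] u, ?_⟩
    simp only [RT.ch, Finset.mem_filter, Finset.mem_erase, T.mem_SF]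
    refine ⟨⟨?_, u, hu, i, rfl⟩, (Function.iterate_succ_apply' _ _ _).symm⟩
    intro h
    apply hU
    rw [Function.iterate_succ_apply', h, T.par_r]
    exact T.hr

theorem RT.U_sub_SF : T.U ⊆ T.SF := fun _ h => T.mem_SF.2 (T.U_sub h)

theorem RT.W_sub : T.W ⊆ T.SF := Finset.union_subset T.U_sub_SF (Finset.filter_subset _ _)

theorem RT.Br_card : T.Br.card + 1 ≤ T.U.card := by
  have h1 : ∑ v ∈ T.SF, (1 + if v ∈ T.Br then 1 else 0) ≤
      ∑ v ∈ T.SF, ((T.ch v).card + if v ∈ T.U then 1 else 0) := by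
    apply Finset.sum_le_sum
    intro v hv
    by_cases hU : v ∈ T.U
    · by_cases hB : v ∈ T.Br
      · have := (Finset.mem_filter.1 hB).2
        simp only [hU, hB, if_true]; omega
      · simp only [hU, hB, if_true, if_false]; omega
    · have := T.ch_pos (T.mem_SF.1 hv) hU
      by_cases hB : v ∈ T.Br
      · have := (Finset.mem_filter.1 hB).2
        simp only [hU, hB, if_true, if_false]; omega
      · simp only [hU, hB, if_false]; omega
  rw [Finset.sum_add_distrib, Finset.sum_add_distrib, T.sum_ch] at h1
  simp only [Finset.sum_const, smul_eq_mul, mul_one, Finset.sum_boole, Nat.cast_id] at h1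
  have e1 : T.SF.filter (fun v => v ∈ T.Br) = T.Br := by
    rw [Finset.filter_mem_eq_inter]; exact Finset.inter_eq_right.2 (Finset.filter_subset _ _)
  have e2 : T.SF.filter (fun v => v ∈ T.U) = T.U := by
    rw [Finset.filter_mem_eq_inter]; exact Finset.inter_eq_right.2 T.U_sub_SF
  rw [e1, e2] at h1
  have := Finset.card_pos.2 ⟨_, T.r_mem⟩
  omega

theorem RT.W_card : T.W.card ≤ 2 * T.U.card := by
  have := Finset.card_union_le T.U T.Br
  have := T.Br_card
  simp only [RT.W]
  omega

theorem RT.ch_eq_one {v : V} (hv : v ∈ T.SF) (hW : v ∉ T.W) : (T.ch v).card = 1 := by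
  simp only [RT.W, Finset.mem_union, not_or, RT.Br, Finset.mem_filter, hv, true_and] at hW
  have := T.ch_pos (T.mem_SF.1 hv) hW.1
  omega

theorem RT.r_mem_W : T.r ∈ T.W := Finset.mem_union_left _ T.hr

/-- Uniqueness of the child of a non-branching vertex. -/
theorem RT.child_unique {t t' : V} (ht : t ∈ T.S) (ht' : t' ∈ T.S) (hp : T.par t = T.par t')
    (hW : T.par t ∉ T.W) : t = t' := by
  have h1 := T.ch_eq_one (T.mem_SF.2 (T.S_closed ht)) hW
  rw [Finset.card_eq_one] at h1
  obtain ⟨a, ha⟩ := h1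
  have nr : ∀ z, T.par z ∉ T.W → z ≠ T.r := by
    intro z hz h
    rw [h, T.par_r] at hz
    exact hz T.r_mem_W
  have m1 : t ∈ T.ch (T.par t) := by
    simp only [RT.ch, Finset.mem_filter, Finset.mem_erase, T.mem_SF]
    exact ⟨⟨nr t hW, ht⟩, trivial⟩
  have m2 : t' ∈ T.ch (T.par t) := by
    simp only [RT.ch, Finset.mem_filter, Finset.mem_erase, T.mem_SF]
    exact ⟨⟨nr t' (hp ▸ hW), ht'⟩, hp.symm⟩
  rw [ha, Finset.mem_singleton] at m1 m2
  rw [m1, m2]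

/-- Core vertices which reach `W` by at most `i` parent steps. -/
noncomputable def RT.up (i : ℕ) : Finset V := T.SF.filter (fun t => ∃ j ≤ i, T.par^[j] t ∈ T.W)

theorem RT.up_card (i : ℕ) : (T.up i).card ≤ (i + 1) * T.W.card := by
  induction i with
  | zero =>
    have : T.up 0 ⊆ T.W := by
      intro t ht
      simp only [RT.up, Finset.mem_filter, Nat.le_zero] at ht
      obtain ⟨_, j, rfl, h⟩ := ht
      exact h
    have := Finset.card_le_card this
    omega
  | succ i ih =>
    let C := (T.SF.erase T.r).filter (fun t => T.par t ∈ T.up i)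
    have hsub : T.up (i + 1) ⊆ T.W ∪ C := by
      intro t ht
      simp only [RT.up, Finset.mem_filter] at ht
      obtain ⟨hS, j, hj, h⟩ := ht
      rw [Finset.mem_union]
      by_cases htW : t ∈ T.W
      · exact Or.inl htW
      · right
        simp only [C, Finset.mem_filter, Finset.mem_erase, RT.up, hS, and_true]
        refine ⟨fun h => htW (h ▸ T.r_mem_W), T.mem_SF.2 (T.S_closed (T.mem_SF.1 hS)), ?_⟩
        cases j with
        | zero => exact absurd h htW
        | succ j => exact ⟨j, by omega, h⟩
    have hC : C.card = ∑ v ∈ T.up i, (T.ch v).card := by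
      have := Finset.card_eq_sum_card_fiberwise (s := C) (f := T.par) (t := T.up i) (by
        intro x hx
        exact (Finset.mem_filter.1 hx).2)
      rw [this]
      apply Finset.sum_congr rfl
      intro v hv
      congr 1
      ext t
      simp only [C, RT.ch, Finset.mem_filter]
      constructor
      · rintro ⟨⟨a, b⟩, c⟩; exact ⟨a, c⟩
      · rintro ⟨a, c⟩; exact ⟨⟨a, c ▸ hv⟩, c⟩
    have hWup : T.W ⊆ T.up i := by
      intro w hw
      simp only [RT.up, Finset.mem_filter]
      exact ⟨T.W_sub hw, 0, by omega, hw⟩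
    have hupS : T.up i ⊆ T.SF := Finset.filter_subset _ _
    have hsum : C.card + (T.SF.card - (T.up i).card) = T.SF.card - 1 := by
      rw [← T.sum_ch, hC, ← Finset.sum_sdiff hupS, add_comm]
      congr 1
      rw [Finset.sum_congr rfl (g := fun _ => 1), Finset.sum_const, smul_eq_mul, mul_one,
        Finset.card_sdiff_of_subset hupS]
      intro v hv
      rw [Finset.mem_sdiff] at hv
      exact T.ch_eq_one hv.1 (fun h => hv.2 (hWup h))
    have h1 := Finset.card_le_card hupS
    have h2 := (Finset.card_le_card hsub).trans (Finset.card_union_le _ _)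
    have h3 : C.card ≤ (T.up i).card := by omega
    nlinarith

noncomputable def RT.dn (i : ℕ) : Finset V :=
  (Finset.range (i + 1)).biUnion (fun j => T.W.image (T.par^[j]))

theorem RT.dn_card (i : ℕ) : (T.dn i).card ≤ (i + 1) * T.W.card := by
  have := Finset.card_biUnion_le_card_mul (Finset.range (i + 1))
    (fun j => T.W.image (T.par^[j])) T.W.card (fun j _ => Finset.card_image_le)
  rwa [Finset.card_range] at this

theorem RT.mem_dn {i j : ℕ} {w : V} (hw : w ∈ T.W) (hj : j ≤ i) : T.par^[j] w ∈ T.dn i := by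
  simp only [RT.dn, Finset.mem_biUnion, Finset.mem_range, Finset.mem_image]
  exact ⟨j, by omega, w, hw, rfl⟩

/-- Interior vertices of long bare paths of the core. -/
noncomputable def RT.I (i : ℕ) : Finset V := (T.SF \ T.up i) \ T.dn i

theorem RT.SF_card (i : ℕ) : T.SF.card ≤ (T.I i).card + 2 * (i + 1) * T.W.card := by
  have h1 := T.up_card i
  have h2 := T.dn_card i
  have h3 := Finset.le_card_sdiff (T.up i) T.SF
  have h4 := Finset.le_card_sdiff (T.dn i) (T.SF \ T.up i)
  have h5 : 2 * (i + 1) * T.W.card = (i + 1) * T.W.card + (i + 1) * T.W.card := by ring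
  simp only [RT.I]
  omega

theorem RT.mem_I {i : ℕ} {v : V} (h : v ∈ T.I i) : v ∈ T.S ∧ (∀ j ≤ i, T.par^[j] v ∉ T.W) ∧
    (∀ j ≤ i, ∀ w, T.par^[j] w = v → w ∉ T.W) := by
  simp only [RT.I, Finset.mem_sdiff, RT.up, Finset.mem_filter, not_and, not_exists] at h
  obtain ⟨⟨h1, h2⟩, h3⟩ := h
  refine ⟨T.mem_SF.1 h1, fun j hj => h2 h1 j hj, ?_⟩
  rintro j hj w rfl hw
  exact h3 (T.mem_dn hw hj)

theorem RT.down_unique {N : ℕ} {v : V} (hv : v ∈ T.I N) : ∀ i ≤ N, ∀ y y', y ∈ T.S → y' ∈ T.S →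
    T.par^[i] y = v → T.par^[i] y' = v → y = y' := by
  intro i
  induction i with
  | zero =>
    intro _ y y' _ _ h h'
    exact h.trans h'.symm
  | succ i ih =>
    intro hi y y' hy hy' h h'
    rw [Function.iterate_succ_apply] at h h'
    have e := ih (by omega) _ _ (T.S_closed hy) (T.S_closed hy') h h'
    exact T.child_unique hy hy' e ((T.mem_I hv).2.2 i (by omega) _ h)

/-- Vertices of the core that are close to `v`. -/
noncomputable def RT.rel (N : ℕ) (v : V) : Finset V :=
  (Finset.range (N + 1)).biUnion (fun i => {T.par^[i] v} ∪ T.SF.filter (fun y => T.par^[i] y = v))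

theorem RT.rel_card {N : ℕ} {v : V} (hv : v ∈ T.I N) : (T.rel N v).card ≤ (N + 1) * 2 := by
  have := Finset.card_biUnion_le_card_mul (Finset.range (N + 1))
    (fun i => {T.par^[i] v} ∪ T.SF.filter (fun y => T.par^[i] y = v)) 2 (by
    intro i hi
    rw [Finset.mem_range] at hi
    refine (Finset.card_union_le _ _).trans ?_
    have : (T.SF.filter (fun y => T.par^[i] y = v)).card ≤ 1 := by
      rw [Finset.card_le_one]
      intro a ha b hb
      simp only [Finset.mem_filter, T.mem_SF] at ha hb
      exact T.down_unique hv i (by omega) a b ha.1 hb.1 ha.2 hb.2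
    rw [Finset.card_singleton]
    omega)
  rwa [Finset.card_range] at this

theorem RT.rel_walk {N : ℕ} {v : V} (hv : v ∈ T.I N) (L : ℕ) (hL : L ≤ N) (q : ℕ → V)
    (h0 : q 0 = v) (ha : ∀ i < L, H.Adj (q i) (q (i + 1))) : ∀ j ≤ L,
    ∃ i ≤ j, T.pendant.rt (q j) = T.par^[i] v ∨ T.par^[i] (T.pendant.rt (q j)) = v := by
  obtain ⟨hvS, hv1, hv2⟩ := T.mem_I hv
  intro j
  induction j with
  | zero =>
    intro _
    exact ⟨0, le_rfl, Or.inl (by rw [h0]; exact (T.pendant.inS v hvS).2)⟩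
  | succ j ih =>
    intro hj
    obtain ⟨i, hij, hi⟩ := ih (by omega)
    by_cases hsame : T.pendant.rt (q j) = T.pendant.rt (q (j + 1))
    · exact ⟨i, by omega, by rw [← hsame]; exact hi⟩
    have hadj := ha j (by omega)
    obtain ⟨hS1, hS2⟩ := T.pendant.rt_of_edge hadj hsame
    rw [(T.pendant.inS _ hS1).2] at hi
    rw [(T.pendant.inS _ hS2).2]
    have hnW : q j ∉ T.W := by
      rcases hi with h | h
      · rw [h]; exact hv1 i (by omega)
      · exact hv2 i (by omega) _ h
    rcases T.hedge _ _ hadj with h | h | ⟨h, _⟩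
    · rcases hi with h' | h'
      · exact ⟨i + 1, by omega, Or.inl (by rw [h, h', Function.iterate_succ_apply'])⟩
      · cases i with
        | zero =>
          refine ⟨1, by omega, Or.inl ?_⟩
          have h'' : q j = v := h'
          rw [h, h'']; rfl
        | succ i => exact ⟨i, by omega, Or.inr (by rw [h]; exact h')⟩
    · rcases hi with h' | h'
      · cases i with
        | zero =>
          refine ⟨1, by omega, Or.inr ?_⟩
          have h'' : q j = v := h'
          rw [← h'', h]; rfl
        | succ i =>
          refine ⟨i, by omega, Or.inl ?_⟩
          rw [Function.iterate_succ_apply'] at h'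
          exact T.child_unique hS2 (T.S_iter hvS i) (h.symm.trans h') (h ▸ hnW)
      · exact ⟨i + 1, by omega, Or.inr (by rw [Function.iterate_succ_apply, ← h]; exact h')⟩
    · exact absurd (Finset.mem_union_left _ h) hnW

theorem RT.rel_of_path {N : ℕ} {v y : V} (hv : v ∈ T.I N) (hy : y ∈ T.S) {L : ℕ} (hL : L ≤ N)
    (h : HasPath H L v y) : y ∈ T.rel N v := by
  obtain ⟨q, h0, hL', ha, _⟩ := h
  obtain ⟨i, hi, h⟩ := T.rel_walk hv L hL q h0 ha L le_rfl
  rw [hL', (T.pendant.inS y hy).2] at h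
  simp only [RT.rel, Finset.mem_biUnion, Finset.mem_range, Finset.mem_union, Finset.mem_singleton,
    Finset.mem_filter, T.mem_SF]
  exact ⟨i, by omega, h.imp id (fun h => ⟨hy, h⟩)⟩

theorem RT.I_card {G : SimpleGraph V} {s N : ℕ} (hG : NoHole G s) (hN : 1 ≤ N)
    (hsat : ∀ x y, G.Adj x y → H.Adj x y ∨ HasPath H N x y) :
    (T.I N).card ≤ (2 * N + 4) * s := by
  by_contra hcon
  push Not at hcon
  obtain ⟨A, hA, hAc⟩ := Finset.exists_subset_card_eq (s := T.I N) (n := s) (by nlinarith)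
  have hR : (A.biUnion (T.rel N)).card ≤ s * ((N + 1) * 2) := by
    rw [← hAc]
    exact Finset.card_biUnion_le_card_mul _ _ _ (fun a ha => T.rel_card (hA ha))
  have hB := Finset.le_card_sdiff (A ∪ A.biUnion (T.rel N)) (T.I N)
  have hU := Finset.card_union_le A (A.biUnion (T.rel N))
  obtain ⟨a, ha, b, hb, hab⟩ := hG A (T.I N \ (A ∪ A.biUnion (T.rel N)))
    (Finset.disjoint_sdiff.mono_left Finset.subset_union_left) hAc.ge (by
      have : (T.I N).card - (A ∪ A.biUnion (T.rel N)).card ≥ s := by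
        have : s + s * ((N + 1) * 2) + s = (2 * N + 4) * s := by ring
        omega
      omega)
  simp only [Finset.mem_sdiff, Finset.mem_union, Finset.mem_biUnion, not_or, not_exists,
    not_and] at hb
  apply hb.2.2 a ha
  have hbS := (T.mem_I hb.1).1
  rcases hsat a b hab with h | h
  · refine T.rel_of_path (hA ha) hbS hN (L := 1) ⟨fun i => if i = 0 then a else b, by simp,
      by simp, ?_, ?_⟩
    · intro i hi
      have : i = 0 := by omega
      subst this
      simpa using h
    · intro i hi j hj hij
      have := h.ne
      have := h.ne.symm
      by_cases h1 : i = 0 <;> by_cases h2 : j = 0 <;> simp_all <;> omega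
  · exact T.rel_of_path (hA ha) hbS le_rfl h

/-- The deterministic lower bound. -/
theorem lower_det {G : SimpleGraph V} {s m : ℕ} (hG : NoHole G s) (hs : 1 ≤ s) (hm : 5 ≤ m)
    (hconn : G.Connected) (hsat : IsSaturatedIn G H (cycGraph m)) :
    Fintype.card V + 8 * s * (2 * m) * (2 * Fintype.card V) ≤
      8 * s * (2 * m) * (2 * H.edgeSet.ncard + 3) + 4 * s * ((2 * m + 2) * s) +
      (8 * s * s + 6 * s + 1) := by
  have hsat' : ∀ x y, G.Adj x y → H.Adj x y ∨ HasPath H (m - 1) x y := by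
    intro x y hxy
    by_cases h : H.Adj x y
    · exact Or.inl h
    · exact Or.inr (hasPath_of_copy m hm H x y hsat.2.1 (hsat.2.2 x y hxy h))
  have hreach : ∀ x y, H.Adj x y ∨ HasPath H (m - 1) x y → H.Reachable x y := by
    rintro x y (h | ⟨q, h0, hL, ha, _⟩)
    · exact h.reachable
    · have : ∀ j ≤ m - 1, H.Reachable (q 0) (q j) := by
        intro j
        induction j with
        | zero => intro _; rfl
        | succ j ih => intro hj; exact (ih (by omega)).trans (ha j (by omega)).reachable
      rw [← h0, ← hL]
      exact this _ le_rfl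
  have hHc : H.Connected := by
    have := hconn.nonempty
    refine ⟨?_⟩
    intro x y
    obtain ⟨w⟩ := hconn x y
    induction w with
    | nil => rfl
    | cons h _ ih => exact (hreach _ _ (hsat' _ _ h)).trans ih
  obtain ⟨T, hT⟩ := exists_RT hHc
  have h1 := core_large T.pendant (m - 1) hG hs (by omega) hsat' T.pendant_rt
  have h2 := T.SF_card (m - 1)
  have h3 := T.I_card hG (N := m - 1) (by omega) hsat'
  have h4 := T.W_card
  have e1 : (Finset.univ.filter (fun x => x ∈ T.pendant.S)) = T.SF := rfl
  rw [e1] at h1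
  have e2 : m - 1 + 1 = m := by omega
  have e3 : 2 * (m - 1) + 4 = 2 * m + 2 := by omega
  rw [e2] at h2
  rw [e3] at h3
  have h5 : T.SF.card ≤ (2 * m + 2) * s + 2 * m * (2 * T.U.card) :=
    h2.trans (add_le_add h3 (Nat.mul_le_mul_left _ h4))
  have h6 := Nat.mul_le_mul_left (4 * s) h5
  have h7 := Nat.mul_le_mul_left (8 * s * (2 * m)) hT
  nlinarith

end Core


section Upper
open Classical

/-- `G` has positive density between large sets (one-sided form). -/
def Rp {V : Type*} (G : SimpleGraph V) (β : ℝ) (s : ℕ) : Prop :=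
  ∀ A B : Finset V, Disjoint A B → s ≤ A.card → s ≤ B.card →
    ∃ x ∈ A, β * B.card ≤ ((B.filter (fun y => G.Adj x y)).card : ℝ)

/-- All pairs of vertices have many common neighbours. -/
def Codeg {V : Type*} [Fintype V] (G : SimpleGraph V) (β : ℝ) : Prop :=
  ∀ z h : V, z ≠ h → β * Fintype.card V ≤
    ((Finset.univ.filter (fun w => G.Adj z w ∧ G.Adj h w)).card : ℝ)

theorem Rp.noHole {V : Type*} {G : SimpleGraph V} {β : ℝ} {s : ℕ} (h : Rp G β s) (hβ : 0 < β)
    (hs : 1 ≤ s) : NoHole G s := by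
  intro A B hAB hA hB
  obtain ⟨x, hx, hc⟩ := h A B hAB hA hB
  have : (0 : ℝ) < ((B.filter (fun y => G.Adj x y)).card : ℝ) := by
    refine lt_of_lt_of_le ?_ hc
    have : (0 : ℝ) < B.card := by exact_mod_cast (by omega : 0 < B.card)
    positivity
  have : 0 < (B.filter (fun y => G.Adj x y)).card := by exact_mod_cast this
  obtain ⟨b, hb⟩ := Finset.card_pos.1 this
  rw [Finset.mem_filter] at hb
  exact ⟨x, hx, b, hb.1, hb.2⟩

theorem exists_clique {V : Type*} {G : SimpleGraph V} {β : ℝ} {s : ℕ} (h : Rp G β s)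
    (hβ : 0 < β) (hβ1 : β ≤ 1) : ∀ (j : ℕ) (A : Finset V),
    2 * (s : ℝ) ≤ (β / 2) ^ j * A.card →
    ∃ K ⊆ A, K.card = j ∧ ∀ x ∈ K, ∀ y ∈ K, x ≠ y → G.Adj x y := by
  intro j
  induction j with
  | zero => intro A _; exact ⟨∅, by simp, by simp, by simp⟩
  | succ j ih =>
    intro A hA
    have hp : (β / 2) ^ (j + 1) ≤ 1 := pow_le_one₀ (by positivity) (by linarith)
    have hA2 : 2 * (s : ℝ) ≤ A.card := by
      refine hA.trans ?_
      have : (0 : ℝ) ≤ A.card := by positivity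
      nlinarith
    have hA2' : 2 * s ≤ A.card := by exact_mod_cast hA2
    obtain ⟨A1, hA1, hA1c⟩ := Finset.exists_subset_card_eq (s := A) (n := s) (by omega)
    have hc2 : (A \ A1).card = A.card - s := by rw [Finset.card_sdiff_of_subset hA1, hA1c]
    obtain ⟨x, hx, hxc⟩ := h A1 (A \ A1) Finset.disjoint_sdiff hA1c.ge (by omega)
    have hhalf : (A.card : ℝ) / 2 ≤ ((A \ A1).card : ℝ) := by
      rw [hc2, Nat.cast_sub (by omega)]; linarith
    obtain ⟨K, hK, hKc, hKq⟩ := ih ((A \ A1).filter (fun y => G.Adj x y)) (by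
      refine hA.trans ?_
      rw [pow_succ, mul_assoc]
      apply mul_le_mul_of_nonneg_left _ (by positivity)
      calc β / 2 * A.card = β * (A.card / 2) := by ring
        _ ≤ β * ((A \ A1).card : ℝ) := by gcongr
        _ ≤ _ := hxc)
    have hKx : ∀ y ∈ K, y ∈ A ∧ G.Adj x y := by
      intro y hy
      have := hK hy
      simp only [Finset.mem_filter, Finset.mem_sdiff] at this
      exact ⟨this.1.1, this.2⟩
    have hxK : x ∉ K := fun hxK => (hKx x hxK).2.ne rfl
    refine ⟨insert x K, ?_, ?_, ?_⟩
    · rw [Finset.insert_subset_iff]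
      exact ⟨hA1 hx, fun y hy => (hKx y hy).1⟩
    · rw [Finset.card_insert_of_notMem hxK, hKc]
    · intro a ha b hb hab
      rw [Finset.mem_insert] at ha hb
      rcases ha with rfl | ha
      · rcases hb with rfl | hb
        · exact absurd rfl hab
        · exact (hKx b hb).2
      · rcases hb with rfl | hb
        · exact (hKx a ha).2.symm
        · exact hKq a ha b hb hab

/-- A simple path inside of `Q`. -/
def HasPathIn {V : Type*} (H : SimpleGraph V) (Q : Set V) (L : ℕ) (x y : V) : Prop :=
  ∃ q : ℕ → V, q 0 = x ∧ q L = y ∧ (∀ i < L, H.Adj (q i) (q (i + 1))) ∧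
    (∀ i ≤ L, ∀ j ≤ L, q i = q j → i = j) ∧ ∀ i ≤ L, q i ∈ Q

theorem HasPathIn.hasPath {V : Type*} {H : SimpleGraph V} {Q : Set V} {L : ℕ} {x y : V}
    (h : HasPathIn H Q L x y) : HasPath H L x y := by
  obtain ⟨q, h0, hL, ha, hi, _⟩ := h
  exact ⟨q, h0, hL, ha, hi⟩

theorem HasPathIn.symm {V : Type*} {H : SimpleGraph V} {Q : Set V} {L : ℕ} {x y : V}
    (h : HasPathIn H Q L x y) : HasPathIn H Q L y x := by
  obtain ⟨q, h0, hL, ha, hi, hQ⟩ := h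
  refine ⟨fun i => q (L - i), by simpa using hL, by simpa using h0, ?_, ?_,
    fun i _ => hQ _ (by omega)⟩
  · intro i hiL
    have := ha (L - (i + 1)) (by omega)
    have e : L - (i + 1) + 1 = L - i := by omega
    rw [e] at this
    exact this.symm
  · intro i hiL j hjL hq
    have := hi (L - i) (by omega) (L - j) (by omega) hq
    omega

theorem HasPathIn.prepend {V : Type*} {H : SimpleGraph V} {Q : Set V} {L : ℕ} {x a b : V}
    (h : HasPathIn H Q L a b) (hx : x ∉ Q) (hxa : H.Adj x a) :
    HasPathIn H (insert x Q) (L + 1) x b := by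
  obtain ⟨q, h0, hL, ha, hi, hQ⟩ := h
  refine ⟨fun i => Nat.casesOn i x q, rfl, hL, ?_, ?_, ?_⟩
  · intro i hiL
    cases i with
    | zero => simpa [h0] using hxa
    | succ i => exact ha i (by omega)
  · intro i hiL j hjL hq
    cases i with
    | zero =>
      cases j with
      | zero => rfl
      | succ j =>
        exfalso
        apply hx
        have hq' : x = q j := hq
        rw [hq']; exact hQ j (by omega)
    | succ i =>
      cases j with
      | zero =>
        exfalso
        apply hx
        have hq' : q i = x := hq
        rw [← hq']; exact hQ i (by omega)
      | succ j =>
        have := hi i (by omega) j (by omega) hq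
        omega
  · intro i hiL
    cases i with
    | zero => exact Set.mem_insert _ _
    | succ i => exact Set.mem_insert_of_mem _ (hQ i (by omega))

theorem HasPathIn.append {V : Type*} {H : SimpleGraph V} {Q : Set V} {L : ℕ} {x a b : V}
    (h : HasPathIn H Q L a b) (hx : x ∉ Q) (hxb : H.Adj b x) :
    HasPathIn H (insert x Q) (L + 1) a x := (h.symm.prepend hx hxb.symm).symm

theorem HasPathIn.mono {V : Type*} {H : SimpleGraph V} {Q Q' : Set V} {L : ℕ} {a b : V}
    (h : HasPathIn H Q L a b) (hQ : Q ⊆ Q') : HasPathIn H Q' L a b := by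
  obtain ⟨q, h0, hL, ha, hi, hq⟩ := h
  exact ⟨q, h0, hL, ha, hi, fun i hiL => hQ (hq i hiL)⟩

theorem clique_path {V : Type*} (H : SimpleGraph V) (L : ℕ) : ∀ (Q : Finset V) (a b : V),
    (∀ x ∈ Q, ∀ y ∈ Q, x ≠ y → H.Adj x y) → a ∈ Q → b ∈ Q → a ≠ b → 1 ≤ L → L + 1 ≤ Q.card →
    HasPathIn H (Q : Set V) L a b := by
  induction L with
  | zero => intro _ _ _ _ _ _ _ h; omega
  | succ L ih =>
    intro Q a b hQ ha hb hab _ hc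
    by_cases hL : L = 0
    · subst hL
      refine ⟨fun i => if i = 0 then a else b, by simp, by simp, ?_, ?_, ?_⟩
      · intro i hi
        have : i = 0 := by omega
        subst this
        simpa using hQ a ha b hb hab
      · intro i hi j hj hij
        by_cases h1 : i = 0
        · by_cases h2 : j = 0
          · omega
          · simp only [h1, h2, if_true, if_false] at hij
            exact absurd hij hab
        · by_cases h2 : j = 0
          · simp only [h1, h2, if_true, if_false] at hij
            exact absurd hij hab.symm
          · omega
      · intro i _
        by_cases h1 : i = 0
        · simpa [h1] using ha
        · simpa [h1] using hb
    · have : 0 < ((Q.erase a).erase b).card := by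
        rw [Finset.card_erase_of_mem (Finset.mem_erase.2 ⟨hab.symm, hb⟩),
          Finset.card_erase_of_mem ha]
        omega
      obtain ⟨c, hc'⟩ := Finset.card_pos.1 this
      simp only [Finset.mem_erase] at hc'
      have h1 := ih (Q.erase a) c b (fun x hx y hy => hQ x (Finset.mem_of_mem_erase hx) y
        (Finset.mem_of_mem_erase hy)) (Finset.mem_erase.2 hc'.2)
        (Finset.mem_erase.2 ⟨hab.symm, hb⟩) hc'.1 (by omega)
        (by rw [Finset.card_erase_of_mem ha]; omega)
      refine (h1.prepend (x := a) (by simp) (hQ a ha c hc'.2.2 hc'.2.1.symm)).mono ?_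
      intro z hz
      rcases Set.mem_insert_iff.1 hz with rfl | hz
      · exact ha
      · exact Finset.mem_of_mem_erase (Finset.mem_coe.1 hz)

/-- A family of vertex-disjoint cliques of size `m - 2` in the neighbourhood of `h`. -/
structure Blocks {V : Type*} (G : SimpleGraph V) (h : V) (m : ℕ) (F : Finset (Finset V)) : Prop where
  size : ∀ B ∈ F, B.card = m - 2
  nbr : ∀ B ∈ F, ∀ x ∈ B, G.Adj h x
  clq : ∀ B ∈ F, ∀ x ∈ B, ∀ y ∈ B, x ≠ y → G.Adj x y
  dis : ∀ B ∈ F, ∀ B' ∈ F, ∀ x, x ∈ B → x ∈ B' → B = B'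

theorem Blocks.card {V : Type*} {G : SimpleGraph V} {h : V} {m : ℕ} {F : Finset (Finset V)}
    (hF : Blocks G h m F) : (F.biUnion id).card = F.card * (m - 2) := by
  rw [Finset.card_biUnion, Finset.sum_congr rfl (g := fun _ => m - 2)]
  · simp
  · intro B hB; exact hF.size B hB
  · intro B hB B' hB' hne
    change Disjoint B B'
    rw [Finset.disjoint_left]
    intro x hx hx'
    exact hne (hF.dis B hB B' hB' x hx hx')

variable {V : Type*} [Fintype V] {G : SimpleGraph V} {β : ℝ} {s : ℕ}

theorem block_step (hR : Rp G β s) (hD : Codeg G β) (hβ : 0 < β) (hβ1 : β ≤ 1) {m : ℕ}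
    (hm : 5 ≤ m) (hs : 1 ≤ s) (h z : V) (hz : z ≠ h) (U : Finset V)
    (hU : (U.card : ℝ) ≤ β * Fintype.card V / 2)
    (hs4 : (s : ℝ) ≤ β * Fintype.card V / 4)
    (hbig : 2 * (s : ℝ) ≤ (β / 2) ^ (m - 3) * (β * (β * Fintype.card V / 4))) :
    ∃ K : Finset V, Disjoint K U ∧ K.card = m - 2 ∧ (∀ x ∈ K, G.Adj h x) ∧
      (∀ x ∈ K, ∀ y ∈ K, x ≠ y → G.Adj x y) ∧ ∃ u ∈ K, G.Adj z u := by
  have hs1 : (1 : ℝ) ≤ s := by exact_mod_cast hs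
  let n : ℝ := Fintype.card V
  let D := Finset.univ.filter (fun w => G.Adj z w ∧ G.Adj h w)
  have hDc : β * n ≤ D.card := hD z h hz
  have hDU : (D.card : ℝ) - U.card ≤ (D \ U).card := by
    have := Finset.le_card_sdiff U D
    have h2 : D.card ≤ (D \ U).card + U.card := by omega
    have : (D.card : ℝ) ≤ (D \ U).card + U.card := by exact_mod_cast h2
    linarith
  have hsDU : s ≤ (D \ U).card := by
    have : (s : ℝ) ≤ (D \ U).card := by simp only [n] at hDc; linarith
    exact_mod_cast this
  obtain ⟨A1, hA1, hA1c⟩ := Finset.exists_subset_card_eq hsDU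
  let B := (Finset.univ.filter (fun w => G.Adj h w)) \ (U ∪ A1)
  have hBc : β * n / 4 ≤ B.card := by
    have h1 := Finset.le_card_sdiff (U ∪ A1) (Finset.univ.filter (fun w => G.Adj h w))
    have h2 := Finset.card_union_le U A1
    have h3 : D.card ≤ (Finset.univ.filter (fun w => G.Adj h w)).card := by
      apply Finset.card_le_card
      intro w hw
      simp only [D, Finset.mem_filter] at hw ⊢
      exact ⟨hw.1, hw.2.2⟩
    have h4 : D.card ≤ B.card + (U.card + s) := by simp only [B]; omega
    have h5 : (D.card : ℝ) ≤ B.card + (U.card + s) := by exact_mod_cast h4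
    simp only [n] at hDc ⊢
    linarith
  obtain ⟨u, hu, huc⟩ := hR A1 B (by
    rw [Finset.disjoint_left]
    intro x hx hxB
    simp only [B, Finset.mem_sdiff, Finset.mem_union, not_or] at hxB
    exact hxB.2.2 hx) hA1c.ge (by
    have : (s : ℝ) ≤ B.card := hs4.trans hBc
    exact_mod_cast this)
  obtain ⟨K, hK, hKc, hKq⟩ := exists_clique hR hβ hβ1 (m - 3) (B.filter (fun y => G.Adj u y)) (by
    refine hbig.trans ?_
    apply mul_le_mul_of_nonneg_left _ (by positivity)
    refine le_trans ?_ huc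
    exact mul_le_mul_of_nonneg_left hBc hβ.le)
  have hKx : ∀ y ∈ K, G.Adj h y ∧ y ∉ U ∧ G.Adj u y := by
    intro y hy
    have := hK hy
    simp only [B, Finset.mem_filter, Finset.mem_sdiff, Finset.mem_union, not_or, Finset.mem_univ,
      true_and] at this
    exact ⟨this.1.1, this.1.2.1, this.2⟩
  have hu' := hA1 hu
  simp only [D, Finset.mem_filter, Finset.mem_sdiff, Finset.mem_univ, true_and] at hu'
  refine ⟨insert u K, ?_, ?_, ?_, ?_, u, Finset.mem_insert_self _ _, hu'.1.1⟩
  · rw [Finset.disjoint_left]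
    intro x hx
    rw [Finset.mem_insert] at hx
    rcases hx with rfl | hx
    · exact hu'.2
    · exact (hKx x hx).2.1
  · rw [Finset.card_insert_of_notMem (fun hh => (hKx u hh).2.2.ne rfl), hKc]
    omega
  · intro x hx
    rw [Finset.mem_insert] at hx
    rcases hx with rfl | hx
    · exact hu'.1.2
    · exact (hKx x hx).1
  · intro a ha b hb hab
    rw [Finset.mem_insert] at ha hb
    rcases ha with rfl | ha
    · rcases hb with rfl | hb
      · exact absurd rfl hab
      · exact (hKx b hb).2.2
    · rcases hb with rfl | hb
      · exact (hKx a ha).2.2.symm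
      · exact hKq a ha b hb hab

theorem block_family (hR : Rp G β s) (hD : Codeg G β) (hβ : 0 < β) (hβ1 : β ≤ 1) {m : ℕ}
    (hm : 5 ≤ m) (hs : 1 ≤ s) (h : V)
    (hs4 : (s : ℝ) ≤ β * Fintype.card V / 4)
    (hbig : 2 * (s : ℝ) ≤ (β / 2) ^ (m - 3) * (β * (β * Fintype.card V / 4)))
    (F0 : Finset (Finset V)) (hF0 : Blocks G h m F0) (Z : Finset V) : h ∉ Z →
    (((F0.card + Z.card) * (m - 2) : ℕ) : ℝ) ≤ β * Fintype.card V / 2 →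
    ∃ F : Finset (Finset V), F0 ⊆ F ∧ Blocks G h m F ∧ F.card = F0.card + Z.card ∧
      ∀ z ∈ Z, ∃ B ∈ F, ∃ u ∈ B, G.Adj z u := by
  induction Z using Finset.induction_on with
  | empty => intro _ _; exact ⟨F0, le_rfl, hF0, by simp, by simp⟩
  | insert z Z hzZ ih =>
    intro hh hc
    rw [Finset.mem_insert, not_or] at hh
    rw [Finset.card_insert_of_notMem hzZ] at hc ⊢
    have hle : ((F0.card + Z.card) * (m - 2) : ℕ) ≤ (F0.card + (Z.card + 1)) * (m - 2) :=
      Nat.mul_le_mul_right _ (by omega)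
    have hle' : (((F0.card + Z.card) * (m - 2) : ℕ) : ℝ) ≤ β * Fintype.card V / 2 :=
      le_trans (by exact_mod_cast hle) hc
    obtain ⟨F, hsub, hF, hFc, hFz⟩ := ih hh.2 hle'
    obtain ⟨K, hK1, hK2, hK3, hK4, u, hu, hzu⟩ := block_step hR hD hβ hβ1 hm hs h z
      (fun e => hh.1 e.symm) (F.biUnion id) (by rw [hF.card, hFc]; exact hle') hs4 hbig
    have hKd : ∀ B ∈ F, ∀ x, x ∈ B → x ∉ K := by
      intro B hB x hx hxK
      exact Finset.disjoint_left.1 hK1 hxK (Finset.mem_biUnion.2 ⟨B, hB, hx⟩)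
    have hKF : K ∉ F := fun hKF => hKd K hKF u hu hu
    refine ⟨insert K F, hsub.trans (Finset.subset_insert _ _), ⟨?_, ?_, ?_, ?_⟩, ?_, ?_⟩
    · intro B hB
      rcases Finset.mem_insert.1 hB with rfl | hB
      · exact hK2
      · exact hF.size B hB
    · intro B hB
      rcases Finset.mem_insert.1 hB with rfl | hB
      · exact hK3
      · exact hF.nbr B hB
    · intro B hB
      rcases Finset.mem_insert.1 hB with rfl | hB
      · exact hK4
      · exact hF.clq B hB
    · intro B hB B' hB' x hx hx'
      rcases Finset.mem_insert.1 hB with e1 | hB1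
      · rcases Finset.mem_insert.1 hB' with e2 | hB2
        · rw [e1, e2]
        · rw [e1] at hx
          exact absurd hx (hKd B' hB2 x hx')
      · rcases Finset.mem_insert.1 hB' with e2 | hB2
        · rw [e2] at hx'
          exact absurd hx' (hKd B hB1 x hx)
        · exact hF.dis B hB1 B' hB2 x hx hx'
    · rw [Finset.card_insert_of_notMem hKF, hFc]; omega
    · intro y hy
      rcases Finset.mem_insert.1 hy with rfl | hy
      · exact ⟨K, Finset.mem_insert_self _ _, u, hu, hzu⟩
      · obtain ⟨B, hB, v, hv, hyv⟩ := hFz y hy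
        exact ⟨B, Finset.mem_insert_of_mem hB, v, hv, hyv⟩

/-- Greedy assignment of independent sets of leaves to centers. -/
theorem assign (hR : Rp G β s) {l t : ℕ} (hl : 1 ≤ l) (ht : 1 ≤ t) (hst : s ≤ t) (hβ : 0 < β)
    (hI : ∀ A : Finset V, β * t ≤ A.card →
      ∃ I ⊆ A, I.card = l ∧ ∀ x ∈ I, ∀ y ∈ I, ¬ G.Adj x y) :
    ∀ (k : ℕ) (L B : Finset V), L.card ≤ k → Disjoint L B → L.card + l * s ≤ l * B.card →
    ∃ L0 ⊆ L, L0.card < t ∧ ∃ c : V → V, (∀ x ∈ L, x ∉ L0 → c x ∈ B ∧ G.Adj (c x) x) ∧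
      (∀ x ∈ L, x ∉ L0 → ∀ y ∈ L, y ∉ L0 → c x = c y → ¬ G.Adj x y) ∧
      ∀ v, ((L \ L0).filter (fun x => c x = v)).card ≤ l := by
  intro k
  induction k with
  | zero =>
    intro L B hL _ _
    have : L = ∅ := Finset.card_eq_zero.1 (by omega)
    subst this
    exact ⟨∅, by simp, by simpa using (by omega : 0 < t), id, by simp, by simp, by simp⟩
  | succ k ih =>
    intro L B hLk hLB hcard
    by_cases hLt : L.card < t
    · refine ⟨L, le_rfl, hLt, id, ?_, ?_, ?_⟩
      · intro x hx hx'; exact absurd hx hx'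
      · intro x hx hx'; exact absurd hx hx'
      · simp
    push Not at hLt
    have hBs : s < B.card := by
      by_contra hcon
      push Not at hcon
      have := Nat.mul_le_mul_left l hcon
      omega
    obtain ⟨v, hv, hvc⟩ := hR B L hLB.symm hBs.le (by omega)
    obtain ⟨I, hIs, hIc, hIi⟩ := hI (L.filter (fun y => G.Adj v y)) (by
      refine le_trans ?_ hvc
      apply mul_le_mul_of_nonneg_left _ hβ.le
      exact_mod_cast hLt)
    have hIL : I ⊆ L := hIs.trans (Finset.filter_subset _ _)
    have hIcard : (L \ I).card = L.card - l := by rw [Finset.card_sdiff_of_subset hIL, hIc]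
    have hlL : l ≤ L.card := hIc ▸ Finset.card_le_card hIL
    obtain ⟨L0, hL0, hL0c, c, hc1, hc2, hc3⟩ := ih (L \ I) (B.erase v) (by omega) (by
      rw [Finset.disjoint_left]
      intro x hx hxB
      exact Finset.disjoint_left.1 hLB (Finset.mem_sdiff.1 hx).1 (Finset.mem_of_mem_erase hxB)) (by
      rw [Finset.card_erase_of_mem hv, hIcard]
      have : l * (B.card - 1) = l * B.card - l := by rw [Nat.mul_sub, mul_one]
      omega)
    refine ⟨L0, hL0.trans Finset.sdiff_subset, hL0c, fun x => if x ∈ I then v else c x, ?_, ?_, ?_⟩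
    · intro x hx hx0
      by_cases hxI : x ∈ I
      · simp only [hxI, if_true]
        exact ⟨hv, (Finset.mem_filter.1 (hIs hxI)).2⟩
      · simp only [hxI, if_false]
        have := hc1 x (Finset.mem_sdiff.2 ⟨hx, hxI⟩) hx0
        exact ⟨Finset.mem_of_mem_erase this.1, this.2⟩
    · intro x hx hx0 y hy hy0 hxy
      have nv : ∀ z ∈ L, z ∉ L0 → z ∉ I → c z ≠ v := fun z hz hz0 hzI =>
        Finset.ne_of_mem_erase (hc1 z (Finset.mem_sdiff.2 ⟨hz, hzI⟩) hz0).1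
      by_cases hxI : x ∈ I
      · by_cases hyI : y ∈ I
        · exact hIi x hxI y hyI
        · simp only [hxI, hyI, if_true, if_false] at hxy
          exact absurd hxy.symm (nv y hy hy0 hyI)
      · by_cases hyI : y ∈ I
        · simp only [hxI, hyI, if_true, if_false] at hxy
          exact absurd hxy (nv x hx hx0 hxI)
        · simp only [hxI, hyI, if_false] at hxy
          exact hc2 x (Finset.mem_sdiff.2 ⟨hx, hxI⟩) hx0 y (Finset.mem_sdiff.2 ⟨hy, hyI⟩) hy0 hxy
    · intro w
      by_cases hw : w = v
      · subst hw
        rw [← hIc]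
        apply Finset.card_le_card
        intro x hx
        simp only [Finset.mem_filter, Finset.mem_sdiff] at hx
        by_contra hxI
        have h1 := hx.2
        simp only [hxI, if_false] at h1
        exact Finset.ne_of_mem_erase (hc1 x (Finset.mem_sdiff.2 ⟨hx.1.1, hxI⟩) hx.1.2).1 h1
      · refine le_trans (Finset.card_le_card ?_) (hc3 w)
        intro x hx
        simp only [Finset.mem_filter, Finset.mem_sdiff] at hx ⊢
        have hxI : x ∉ I := by
          intro hxI
          have h1 := hx.2
          simp only [hxI, if_true] at h1
          exact hw h1.symm
        have h1 := hx.2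
        simp only [hxI, if_false] at h1
        exact ⟨⟨⟨hx.1.1, hxI⟩, hx.1.2⟩, h1⟩

end Upper


section Construction
open Classical

/-- Membership in the union of the blocks. -/
def InC {V : Type*} (F : Finset (Finset V)) (x : V) : Prop := ∃ B ∈ F, x ∈ B

/-- The relation generating the construction. -/
def conRel {V : Type*} (h : V) (F : Finset (Finset V)) (c : V → V) (x y : V) : Prop :=
  (x = h ∧ InC F y) ∨ (∃ B ∈ F, x ∈ B ∧ y ∈ B) ∨ (¬ InC F x ∧ x ≠ h ∧ y = c x)

/-- The construction: hub joined to blocks, leaves hanging on the blocks. -/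
def conGraph {V : Type*} (h : V) (F : Finset (Finset V)) (c : V → V) : SimpleGraph V :=
  SimpleGraph.fromRel (conRel h F c)

/-- The leaf map is legitimate. -/
def LeafMap {V : Type*} (G : SimpleGraph V) (h : V) (F : Finset (Finset V)) (c : V → V) : Prop :=
  ∀ x, x ≠ h → ¬ InC F x → InC F (c x) ∧ G.Adj (c x) x

variable {V : Type*} {G : SimpleGraph V} {h : V} {m : ℕ} {F : Finset (Finset V)} {c : V → V}

theorem Blocks.hub (hF : Blocks G h m F) : ¬ InC F h := by
  rintro ⟨B, hB, hh⟩
  exact (hF.nbr B hB h hh).ne rfl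

theorem con_le (hF : Blocks G h m F) (hc : LeafMap G h F c) : conGraph h F c ≤ G := by
  have key : ∀ x y, x ≠ y → conRel h F c x y → G.Adj x y := by
    rintro x y hne (⟨rfl, B, hB, hy⟩ | ⟨B, hB, hx, hy⟩ | ⟨hx, hxh, rfl⟩)
    · exact hF.nbr B hB y hy
    · exact hF.clq B hB x hx y hy hne
    · exact (hc x hxh hx).2.symm
  intro x y hxy
  rw [conGraph, SimpleGraph.fromRel_adj] at hxy
  rcases hxy.2 with h1 | h1
  · exact key x y hxy.1 h1
  · exact (key y x hxy.1.symm h1).symm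

theorem con_clique (hF : Blocks G h m F) {B : Finset V} (hB : B ∈ F) :
    ∀ x ∈ insert h B, ∀ y ∈ insert h B, x ≠ y → (conGraph h F c).Adj x y := by
  intro x hx y hy hne
  rw [conGraph, SimpleGraph.fromRel_adj]
  refine ⟨hne, ?_⟩
  rcases Finset.mem_insert.1 hx with hx | hx
  · rcases Finset.mem_insert.1 hy with hy | hy
    · exact absurd (hx.trans hy.symm) hne
    · exact Or.inl (Or.inl ⟨hx, B, hB, hy⟩)
  · rcases Finset.mem_insert.1 hy with hy | hy
    · exact Or.inr (Or.inl ⟨hy, B, hB, hx⟩)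
    · exact Or.inl (Or.inr (Or.inl ⟨B, hB, hx, hy⟩))

theorem con_leaf (hc : LeafMap G h F c) {x : V} (hx : ¬ InC F x) (hxh : x ≠ h) :
    (conGraph h F c).Adj (c x) x := by
  rw [conGraph, SimpleGraph.fromRel_adj]
  exact ⟨(hc x hxh hx).2.ne, Or.inr (Or.inr (Or.inr ⟨hx, hxh, rfl⟩))⟩

theorem con_leaf_unique (hF : Blocks G h m F) (hc : LeafMap G h F c) {x y : V} (hx : ¬ InC F x)
    (hxh : x ≠ h) (hxy : (conGraph h F c).Adj x y) : y = c x := by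
  rw [conGraph, SimpleGraph.fromRel_adj] at hxy
  rcases hxy.2 with (⟨rfl, _⟩ | ⟨B, hB, h1, _⟩ | ⟨_, _, h1⟩) | (⟨_, h1⟩ | ⟨B, hB, _, h1⟩ | ⟨h1, h2, h3⟩)
  · exact absurd rfl hxh
  · exact absurd ⟨B, hB, h1⟩ hx
  · exact h1
  · exact absurd h1 hx
  · exact absurd ⟨B, hB, h1⟩ hx
  · rw [h3] at hx
    exact absurd (hc y h2 h1).1 hx

theorem con_block (hF : Blocks G h m F) {x y : V} {B : Finset V} (hB : B ∈ F) (hx : x ∈ B)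
    (hy : InC F y) (hxy : (conGraph h F c).Adj x y) : y ∈ B := by
  have hxC : InC F x := ⟨B, hB, hx⟩
  rw [conGraph, SimpleGraph.fromRel_adj] at hxy
  rcases hxy.2 with (⟨rfl, _⟩ | ⟨B', hB', h1, h2⟩ | ⟨h1, _, _⟩) | (⟨rfl, _⟩ | ⟨B', hB', h2, h1⟩ | ⟨h1, h2, h3⟩)
  · exact absurd hxC hF.hub
  · rw [hF.dis B hB B' hB' x hx h1]; exact h2
  · exact absurd hxC h1
  · exact absurd hy hF.hub
  · rw [hF.dis B hB B' hB' x hx h1]; exact h2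
  · exact absurd hy h1

theorem con_free (hm : 5 ≤ m) (hF : Blocks G h m F) (hc : LeafMap G h F c) :
    ¬ ContainsCopy (cycGraph m) (conGraph h F c) := by
  rintro ⟨f, hf, hadj⟩
  have : Fact (1 < m) := ⟨by omega⟩
  have hsucc : ∀ a, (conGraph h F c).Adj (f a) (f (a + 1)) := fun a => hadj (cyc_adj_succ m hm a)
  have hC : ∀ a, f a ≠ h → InC F (f a) := by
    intro a ha
    by_contra hcon
    have e1 := con_leaf_unique hF hc hcon ha (hsucc a)
    have h2 := hsucc (a - 1)
    rw [sub_add_cancel] at h2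
    have e2 := con_leaf_unique hF hc hcon ha h2.symm
    have e3 := hf (e1.trans e2.symm)
    have e4 : ((2 : ℕ) : ZMod m) = ((0 : ℕ) : ZMod m) := by
      have : (2 : ZMod m) = (a + 1) - (a - 1) := by ring
      push_cast
      rw [this, e3, sub_self]
    have := zmod_nat_inj m (by omega) (by omega) e4
    omega
  obtain ⟨a0, ha0⟩ : ∃ a0 : ZMod m, ∀ i : ℕ, i < m - 1 → f (a0 + 1 + i) ≠ h := by
    by_cases hex : ∃ a, f a = h
    · obtain ⟨a, ha⟩ := hex
      refine ⟨a, ?_⟩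
      intro i hi hcon
      have h1 := hf (hcon.trans ha.symm)
      have e4 : ((i + 1 : ℕ) : ZMod m) = ((0 : ℕ) : ZMod m) := by
        push_cast
        have : ((i : ZMod m) + 1) = (a + 1 + i) - a := by ring
        rw [this, h1, sub_self]
      have := zmod_nat_inj m (by omega) (by omega) e4
      omega
    · push Not at hex
      exact ⟨0, fun i _ => hex _⟩
  obtain ⟨B, hB, h0⟩ := hC _ (ha0 0 (by omega))
  have hall : ∀ i : ℕ, i < m - 1 → f (a0 + 1 + i) ∈ B := by
    intro i
    induction i with
    | zero => intro _; exact h0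
    | succ i ih =>
      intro hi
      have h1 := hsucc (a0 + 1 + i)
      have e : a0 + 1 + (i : ZMod m) + 1 = a0 + 1 + ((i + 1 : ℕ) : ZMod m) := by push_cast; ring
      rw [e] at h1
      exact con_block hF hB (ih (by omega)) (hC _ (ha0 _ hi)) h1
  have := Finset.card_le_card_of_injOn (s := Finset.range (m - 1)) (t := B)
    (fun i : ℕ => f (a0 + 1 + i)) (by
      intro i hi
      exact hall i (Finset.mem_range.1 (Finset.mem_coe.1 hi))) (by
      intro i hi j hj hij
      have hi := Finset.mem_range.1 (Finset.mem_coe.1 hi)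
      have hj := Finset.mem_range.1 (Finset.mem_coe.1 hj)
      exact zmod_nat_inj m (by omega) (by omega) (add_left_cancel (hf hij)))
  rw [Finset.card_range, hF.size B hB] at this
  omega

theorem con_path (hm : 5 ≤ m) (hF : Blocks G h m F) {B : Finset V} (hB : B ∈ F) {a b : V}
    (ha : a ∈ insert h B) (hb : b ∈ insert h B) (hab : a ≠ b) {L : ℕ} (hL : 1 ≤ L)
    (hLm : L ≤ m - 2) : HasPathIn (conGraph h F c) ((insert h B : Finset V) : Set V) L a b := by
  refine clique_path _ L _ a b (con_clique hF hB) ha hb hab hL ?_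
  rw [Finset.card_insert_of_notMem (fun hh => hF.hub ⟨B, hB, hh⟩), hF.size B hB]
  omega

theorem notMem_of_leaf {B : Finset V} (hB : B ∈ F) {x : V} (hx : ¬ InC F x)
    (hxh : x ≠ h) : x ∉ ((insert h B : Finset V) : Set V) := by
  intro hcon
  rcases Finset.mem_insert.1 (Finset.mem_coe.1 hcon) with h1 | h1
  · exact hxh h1
  · exact hx ⟨B, hB, h1⟩

theorem notMem_of_block (hF : Blocks G h m F) {B B' : Finset V} (hB : B ∈ F) (hB' : B' ∈ F)
    (hne : B ≠ B') {x : V} (hx : x ∈ B') : x ∉ ((insert h B : Finset V) : Set V) := by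
  intro hcon
  rcases Finset.mem_insert.1 (Finset.mem_coe.1 hcon) with h1 | h1
  · exact hF.hub ⟨B', hB', h1 ▸ hx⟩
  · exact hne (hF.dis B hB B' hB' x h1 hx)

theorem ne_hub (hF : Blocks G h m F) {x : V} (hx : InC F x) : x ≠ h := by
  rintro rfl
  exact hF.hub hx

theorem con_hub_adj (hF : Blocks G h m F) {x : V} (hx : InC F x) :
    (conGraph h F c).Adj h x := by
  obtain ⟨B, hB, hxB⟩ := hx
  exact con_clique hF hB h (Finset.mem_insert_self _ _) x (Finset.mem_insert_of_mem hxB)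
    (ne_hub hF ⟨B, hB, hxB⟩).symm

/-- hub to leaf -/
theorem con_hl (hm : 5 ≤ m) (hF : Blocks G h m F) (hc : LeafMap G h F c) {y : V}
    (hy : ¬ InC F y) (hyh : y ≠ h) : HasPath (conGraph h F c) (m - 1) h y := by
  obtain ⟨B, hB, hcB⟩ := (hc y hyh hy).1
  have h1 := (con_path (c := c) hm hF hB (Finset.mem_insert_self _ _) (Finset.mem_insert_of_mem hcB)
    (ne_hub hF ⟨B, hB, hcB⟩).symm (L := m - 2) (by omega) le_rfl).append
    (notMem_of_leaf hB hy hyh) (con_leaf hc hy hyh)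
  have e : m - 2 + 1 = m - 1 := by omega
  rw [e] at h1
  exact h1.hasPath

/-- center to center -/
theorem con_cc (hm : 5 ≤ m) (hF : Blocks G h m F) {x y : V} (hx : InC F x) (hy : InC F y)
    (hxy : x ≠ y) (hn : ¬ (conGraph h F c).Adj x y) : HasPath (conGraph h F c) (m - 1) x y := by
  obtain ⟨B, hB, hxB⟩ := hx
  obtain ⟨B', hB', hyB⟩ := hy
  have hne : B ≠ B' := by
    rintro rfl
    exact hn (con_clique hF hB x (Finset.mem_insert_of_mem hxB) y (Finset.mem_insert_of_mem hyB) hxy)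
  have h1 := (con_path (c := c) hm hF hB (Finset.mem_insert_of_mem hxB) (Finset.mem_insert_self _ _)
    (ne_hub hF ⟨B, hB, hxB⟩) (L := m - 2) (by omega) le_rfl).append
    (notMem_of_block hF hB hB' hne hyB) (con_hub_adj hF ⟨B', hB', hyB⟩)
  have e : m - 2 + 1 = m - 1 := by omega
  rw [e] at h1
  exact h1.hasPath

/-- center to leaf -/
theorem con_cl (hm : 5 ≤ m) (hF : Blocks G h m F) (hc : LeafMap G h F c) {x y : V} (hx : InC F x)
    (hy : ¬ InC F y) (hyh : y ≠ h)
    (hn : ¬ (conGraph h F c).Adj x y) : HasPath (conGraph h F c) (m - 1) x y := by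
  obtain ⟨B, hB, hxB⟩ := hx
  obtain ⟨B', hB', hcB⟩ := (hc y hyh hy).1
  have hcy : x ≠ c y := by
    rintro rfl
    exact hn (con_leaf hc hy hyh)
  by_cases hne : B = B'
  · subst hne
    have h1 := (con_path (c := c) hm hF hB (Finset.mem_insert_of_mem hxB)
      (Finset.mem_insert_of_mem hcB)
      hcy (L := m - 2) (by omega) le_rfl).append
      (notMem_of_leaf hB hy hyh) (con_leaf hc hy hyh)
    have e : m - 2 + 1 = m - 1 := by omega
    rw [e] at h1
    exact h1.hasPath
  · have h1 := ((con_path (c := c) hm hF hB (Finset.mem_insert_of_mem hxB)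
      (Finset.mem_insert_self _ _)
      (ne_hub hF ⟨B, hB, hxB⟩) (L := m - 3) (by omega) (by omega)).append
      (notMem_of_block hF hB hB' hne hcB) (con_hub_adj hF ⟨B', hB', hcB⟩)).append (x := y) (by
        rw [Set.mem_insert_iff, not_or]
        refine ⟨?_, notMem_of_leaf hB hy hyh⟩
        intro e
        exact hy (e ▸ ⟨B', hB', hcB⟩)) (con_leaf hc hy hyh)
    have e : m - 3 + 1 + 1 = m - 1 := by omega
    rw [e] at h1
    exact h1.hasPath

/-- leaf to leaf -/
theorem con_ll (hm : 5 ≤ m) (hF : Blocks G h m F) (hc : LeafMap G h F c) {x y : V} (hx : ¬ InC F x)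
    (hxh : x ≠ h) (hy : ¬ InC F y) (hyh : y ≠ h) (hxy : x ≠ y) (hcc : c x ≠ c y) :
    HasPath (conGraph h F c) (m - 1) x y := by
  obtain ⟨B, hB, hxB⟩ := (hc x hxh hx).1
  obtain ⟨B', hB', hcB⟩ := (hc y hyh hy).1
  by_cases hne : B = B'
  · subst hne
    have h1 := ((con_path (c := c) hm hF hB (Finset.mem_insert_of_mem hxB)
      (Finset.mem_insert_of_mem hcB)
      hcc (L := m - 3) (by omega) (by omega)).append
      (notMem_of_leaf hB hy hyh) (con_leaf hc hy hyh)).prepend (x := x) (by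
        rw [Set.mem_insert_iff, not_or]
        exact ⟨hxy, notMem_of_leaf hB hx hxh⟩) (con_leaf hc hx hxh).symm
    have e : m - 3 + 1 + 1 = m - 1 := by omega
    rw [e] at h1
    exact h1.hasPath
  · have h1 := (((con_path (c := c) hm hF hB (Finset.mem_insert_of_mem hxB)
      (Finset.mem_insert_self _ _)
      (ne_hub hF ⟨B, hB, hxB⟩) (L := m - 4) (by omega) (by omega)).append
      (notMem_of_block hF hB hB' hne hcB) (con_hub_adj hF ⟨B', hB', hcB⟩)).append (x := y) (by
        rw [Set.mem_insert_iff, not_or]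
        refine ⟨?_, notMem_of_leaf hB hy hyh⟩
        intro e
        exact hy (e ▸ ⟨B', hB', hcB⟩)) (con_leaf hc hy hyh)).prepend (x := x) (by
        rw [Set.mem_insert_iff, not_or, Set.mem_insert_iff, not_or]
        refine ⟨hxy, ?_, notMem_of_leaf hB hx hxh⟩
        intro e
        exact hx (e ▸ ⟨B', hB', hcB⟩)) (con_leaf hc hx hxh).symm
    have e : m - 4 + 1 + 1 + 1 = m - 1 := by omega
    rw [e] at h1
    exact h1.hasPath

theorem con_hasPath (hm : 5 ≤ m) (hF : Blocks G h m F) (hc : LeafMap G h F c) {x y : V}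
    (hxy : x ≠ y) (hn : ¬ (conGraph h F c).Adj x y)
    (hb : ¬ (¬ InC F x ∧ x ≠ h ∧ ¬ InC F y ∧ y ≠ h ∧ c x = c y)) :
    HasPath (conGraph h F c) (m - 1) x y := by
  have hn' : ¬ (conGraph h F c).Adj y x := fun hh => hn hh.symm
  by_cases hx : x = h
  · subst hx
    by_cases hy : InC F y
    · exact absurd (con_hub_adj hF hy) hn
    · exact con_hl hm hF hc hy hxy.symm
  by_cases hy : y = h
  · subst hy
    by_cases hx : InC F x
    · exact absurd (con_hub_adj hF hx) hn'
    · exact (con_hl hm hF hc hx hxy).symm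
  by_cases hxC : InC F x
  · by_cases hyC : InC F y
    · exact con_cc hm hF hxC hyC hxy hn
    · exact con_cl hm hF hc hxC hyC hy hn
  · by_cases hyC : InC F y
    · exact (con_cl hm hF hc hyC hxC hx hn').symm
    · refine con_ll hm hF hc hxC hx hyC hy hxy ?_
      intro e
      exact hb ⟨hxC, hx, hyC, hy, e⟩

theorem con_edges [Fintype V] (hm : 5 ≤ m) (hF : Blocks G h m F) :
    (conGraph h F c).edgeSet.ncard ≤ Fintype.card V + F.card * m ^ 2 := by
  have hsub : (conGraph h F c).edgeSet ⊆
      ((Finset.univ.image (fun x => s(x, c x)) ∪ F.biUnion (fun B => (insert h B).sym2) :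
        Finset (Sym2 V)) : Set (Sym2 V)) := by
    have key : ∀ x y, conRel h F c x y → s(x, y) ∈
      (Finset.univ.image (fun x => s(x, c x)) ∪ F.biUnion (fun B => (insert h B).sym2) :
        Finset (Sym2 V)) := by
      rintro x y (⟨rfl, B, hB, hy⟩ | ⟨B, hB, hx, hy⟩ | ⟨hx, hxh, rfl⟩)
      · refine Finset.mem_union_right _ (Finset.mem_biUnion.2 ⟨B, hB, ?_⟩)
        rw [Finset.mk_mem_sym2_iff]
        exact ⟨Finset.mem_insert_self _ _, Finset.mem_insert_of_mem hy⟩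
      · refine Finset.mem_union_right _ (Finset.mem_biUnion.2 ⟨B, hB, ?_⟩)
        rw [Finset.mk_mem_sym2_iff]
        exact ⟨Finset.mem_insert_of_mem hx, Finset.mem_insert_of_mem hy⟩
      · exact Finset.mem_union_left _ (Finset.mem_image.2 ⟨x, Finset.mem_univ _, rfl⟩)
    intro e
    induction e using Sym2.ind with
    | _ x y =>
      intro hxy
      rw [SimpleGraph.mem_edgeSet, conGraph, SimpleGraph.fromRel_adj] at hxy
      rw [Finset.mem_coe]
      rcases hxy.2 with h1 | h1
      · exact key x y h1
      · rw [Sym2.eq_swap]; exact key y x h1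
  refine (Set.ncard_le_ncard hsub (Finset.finite_toSet _)).trans ?_
  rw [Set.ncard_coe_finset]
  refine (Finset.card_union_le _ _).trans ?_
  refine add_le_add (Finset.card_image_le.trans (by simp)) ?_
  apply Finset.card_biUnion_le_card_mul
  intro B hB
  rw [Finset.card_sym2, Finset.card_insert_of_notMem (fun hh => hF.hub ⟨B, hB, hh⟩), hF.size B hB]
  have e : m - 2 + 1 + 1 = m := by omega
  rw [e]
  exact Nat.choose_le_pow m 2

end Construction


section UpperDet
open Classical

theorem codeg_connected {V : Type*} [Fintype V] [Nonempty V] {G : SimpleGraph V} {β : ℝ}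
    (hD : Codeg G β) (hβ : 0 < β) : G.Connected := by
  rw [SimpleGraph.connected_iff]
  refine ⟨?_, inferInstance⟩
  intro x y
  by_cases hxy : x = y
  · subst hxy; exact SimpleGraph.Reachable.refl _
  have h1 := hD x y hxy
  have h2 : (0 : ℝ) < Fintype.card V := by exact_mod_cast Fintype.card_pos
  have h3 : (0 : ℝ) < ((Finset.univ.filter (fun w => G.Adj x w ∧ G.Adj y w)).card : ℝ) :=
    lt_of_lt_of_le (by positivity) h1
  have h4 : 0 < (Finset.univ.filter (fun w => G.Adj x w ∧ G.Adj y w)).card := by exact_mod_cast h3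
  obtain ⟨w, hw⟩ := Finset.card_pos.1 h4
  rw [Finset.mem_filter] at hw
  exact hw.2.1.reachable.trans hw.2.2.symm.reachable

theorem mem_biUnion_inC {V : Type*} {F : Finset (Finset V)} {x : V} :
    x ∈ F.biUnion id ↔ InC F x := by
  simp [InC]

theorem upper_det {V : Type*} [Fintype V] {G : SimpleGraph V} {β : ℝ} {s l t m N : ℕ}
    (hR : Rp G β s) (hR' : Rp Gᶜ β s) (hD : Codeg G β) (hβ : 0 < β) (hβ1 : β ≤ 1) (hm : 5 ≤ m)
    (hs : 1 ≤ s) (hl : 1 ≤ l) (ht : 1 ≤ t) (hst : s ≤ t)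
    (hind : 2 * (s : ℝ) ≤ (β / 2) ^ l * (β * t))
    (hNs : (((N + s) * (m - 2) : ℕ) : ℝ) ≤ β * Fintype.card V / 2)
    (hN : N + 1 ≤ Fintype.card V)
    (hsN : s ≤ N * (m - 2))
    (hs4 : (s : ℝ) ≤ β * Fintype.card V / 4)
    (hbig : 2 * (s : ℝ) ≤ (β / 2) ^ (m - 3) * (β * (β * Fintype.card V / 4)))
    (hlN : Fintype.card V + l * s ≤ l * (N * (m - 2))) :
    satNum G (cycGraph m) ≤ Fintype.card V + (N + s) * m ^ 2 + t * (t + l) := by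
  have hne : Nonempty V := Fintype.card_pos_iff.1 (by omega)
  obtain ⟨h⟩ := hne
  have hF0 : Blocks G h m (∅ : Finset (Finset V)) := ⟨by simp, by simp, by simp, by simp⟩
  obtain ⟨Z1, hZ1, hZ1c⟩ := Finset.exists_subset_card_eq (s := Finset.univ.erase h) (n := N) (by
    rw [Finset.card_erase_of_mem (Finset.mem_univ _), Finset.card_univ]; omega)
  have hhZ1 : h ∉ Z1 := fun hh => by simpa using hZ1 hh
  obtain ⟨F1, -, hF1, hF1c, -⟩ := block_family hR hD hβ hβ1 hm hs h hs4 hbig ∅ hF0 Z1 hhZ1 (by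
    refine le_trans ?_ hNs
    have : (((∅ : Finset (Finset V)).card + Z1.card) * (m - 2) : ℕ) ≤ (N + s) * (m - 2) := by
      apply Nat.mul_le_mul_right
      rw [hZ1c]; simp
    exact_mod_cast this)
  rw [Finset.card_empty, zero_add, hZ1c] at hF1c
  let Z2 : Finset V := Finset.univ.filter
    (fun x => x ≠ h ∧ ¬ InC F1 x ∧ ∀ u, InC F1 u → ¬ G.Adj x u)
  have hZ2c : Z2.card < s := by
    by_contra hcon
    push Not at hcon
    obtain ⟨x, hx, y, hy, hxy⟩ := (hR.noHole hβ hs) Z2 (F1.biUnion id) (by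
      rw [Finset.disjoint_left]
      intro x hx hx2
      exact (Finset.mem_filter.1 hx).2.2.1 (mem_biUnion_inC.1 hx2)) hcon
      (by rw [hF1.card, hF1c]; exact hsN)
    exact (Finset.mem_filter.1 hx).2.2.2 y (mem_biUnion_inC.1 hy) hxy
  obtain ⟨F, hFF, hF, hFc, hFz⟩ := block_family hR hD hβ hβ1 hm hs h hs4 hbig F1 hF1 Z2
    (by simp [Z2]) (by
    refine le_trans ?_ hNs
    have : ((F1.card + Z2.card) * (m - 2) : ℕ) ≤ (N + s) * (m - 2) := by
      apply Nat.mul_le_mul_right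
      omega
    exact_mod_cast this)
  -- every leaf has a neighbouring centre
  have hnb : ∀ x, x ≠ h → ¬ InC F x → ∃ u, InC F u ∧ G.Adj u x := by
    intro x hxh hxC
    have hx1 : ¬ InC F1 x := fun ⟨B, hB, hx⟩ => hxC ⟨B, hFF hB, hx⟩
    by_cases hx2 : x ∈ Z2
    · obtain ⟨B, hB, u, hu, hxu⟩ := hFz x hx2
      exact ⟨u, ⟨B, hB, hu⟩, hxu.symm⟩
    · simp only [Z2, Finset.mem_filter, Finset.mem_univ, true_and, not_and] at hx2
      have := hx2 hxh hx1
      push Not at this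
      obtain ⟨u, ⟨B, hB, hu⟩, hxu⟩ := this
      exact ⟨u, ⟨B, hFF hB, hu⟩, hxu.symm⟩
  let L : Finset V := Finset.univ.filter (fun x => x ≠ h ∧ ¬ InC F x)
  have hLmem : ∀ x, x ∈ L ↔ x ≠ h ∧ ¬ InC F x := by intro x; simp [L]
  have hCcard : N * (m - 2) ≤ (F.biUnion id).card := by
    rw [hF.card]
    exact Nat.mul_le_mul_right _ (by omega)
  obtain ⟨L0, hL0, hL0c, c, hc1, hc2, hc3⟩ := assign hR hl ht hst hβ (by
    intro A hA
    obtain ⟨I, hI, hIc, hIq⟩ := exists_clique hR' hβ hβ1 l A (hind.trans (by gcongr))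
    refine ⟨I, hI, hIc, ?_⟩
    intro x hx y hy hxy
    have := hIq x hx y hy hxy.ne
    rw [SimpleGraph.compl_adj] at this
    exact this.2 hxy) L.card L (F.biUnion id) le_rfl (by
      rw [Finset.disjoint_left]
      intro x hx hx2
      exact ((hLmem x).1 hx).2 (mem_biUnion_inC.1 hx2)) (by
      have h1 : L.card ≤ Fintype.card V := Finset.card_le_univ _
      have h2 := Nat.mul_le_mul_left l hCcard
      omega)
  have hch : ∀ x, ∃ u, x ≠ h → ¬ InC F x → InC F u ∧ G.Adj u x := by
    intro x
    by_cases h1 : x ≠ h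
    · by_cases h2 : InC F x
      · exact ⟨x, fun _ h3 => absurd h2 h3⟩
      · obtain ⟨u, hu⟩ := hnb x h1 h2
        exact ⟨u, fun _ _ => hu⟩
    · exact ⟨x, fun h3 => absurd h3 h1⟩
  choose d hd using hch
  let c' : V → V := fun x => if x ∈ L0 then d x else c x
  have hc' : LeafMap G h F c' := by
    intro x hxh hxC
    by_cases hx0 : x ∈ L0
    · simp only [c', hx0, if_true]; exact hd x hxh hxC
    · simp only [c', hx0, if_false]
      have := hc1 x ((hLmem x).2 ⟨hxh, hxC⟩) hx0
      exact ⟨mem_biUnion_inC.1 this.1, this.2⟩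
  let bad : Finset (Sym2 V) := L0.biUnion (fun x =>
    (L0 ∪ (L \ L0).filter (fun y => c y = c' x)).image (fun y => s(x, y)))
  have hbadc : bad.card ≤ t * (t + l) := by
    refine (Finset.card_biUnion_le_card_mul _ _ (t + l) ?_).trans (Nat.mul_le_mul_right _ hL0c.le)
    intro x _
    refine Finset.card_image_le.trans ((Finset.card_union_le _ _).trans ?_)
    exact add_le_add hL0c.le (hc3 _)
  have hmain := satNum_le_of_partial G (conGraph h F c') (cycGraph m) (con_le hF hc')
    (con_free hm hF hc') (bad : Set (Sym2 V)) (by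
    intro x y hxy hn hb
    apply copy_of_hasPath m hm
    apply con_hasPath hm hF hc' hxy.ne hn
    rintro ⟨hxC, hxh, hyC, hyh, he⟩
    apply hb
    have hxL := (hLmem x).2 ⟨hxh, hxC⟩
    have hyL := (hLmem y).2 ⟨hyh, hyC⟩
    rw [Finset.mem_coe]
    by_cases hx0 : x ∈ L0
    · refine Finset.mem_biUnion.2 ⟨x, hx0, Finset.mem_image.2 ⟨y, ?_, rfl⟩⟩
      by_cases hy0 : y ∈ L0
      · exact Finset.mem_union_left _ hy0
      · refine Finset.mem_union_right _ (Finset.mem_filter.2 ⟨Finset.mem_sdiff.2 ⟨hyL, hy0⟩, ?_⟩)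
        rw [he]; simp only [c', hy0, if_false]
    · by_cases hy0 : y ∈ L0
      · refine Finset.mem_biUnion.2 ⟨y, hy0, Finset.mem_image.2 ⟨x, ?_, Sym2.eq_swap⟩⟩
        refine Finset.mem_union_right _ (Finset.mem_filter.2 ⟨Finset.mem_sdiff.2 ⟨hxL, hx0⟩, ?_⟩)
        rw [← he]; simp only [c', hx0, if_false]
      · exfalso
        simp only [c', hx0, hy0, if_false] at he
        exact hc2 x hxL hx0 y hyL hy0 he hxy)
  rw [Set.ncard_coe_finset] at hmain
  have h1 := con_edges (c := c') hm hF
  have h2 : F.card * m ^ 2 ≤ (N + s) * m ^ 2 := Nat.mul_le_mul_right _ (by omega)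
  omega

end UpperDet


section Prob
open Classical

theorem er_isProb (n : ℕ) (p : ℝ) : IsProbabilityMeasure (erMeasure n p) := by
  unfold erMeasure
  infer_instance

theorem er_cyl {n : ℕ} {p : ℝ} (hp0 : 0 < p) (hp1 : p < 1) (F : Finset (EdgeType n)) :
    (erMeasure n p).real {ω | ∀ e ∈ F, ω e = true} = p ^ F.card := by
  have hset : {ω : EdgeType n → Bool | ∀ e ∈ F, ω e = true} =
      Set.univ.pi (fun e => if e ∈ F then {true} else Set.univ) := by
    ext ω
    simp only [Set.mem_ofPred_eq, Set.mem_pi, Set.mem_univ, true_imp_iff]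
    refine forall_congr' fun e => ?_
    by_cases he : e ∈ F <;> simp [he]
  have hq : min (Real.toNNReal p) 1 = Real.toNNReal p := by
    apply min_eq_left
    rw [Real.toNNReal_le_one]; exact hp1.le
  rw [Measure.real, hset, erMeasure, Measure.pi_pi]
  have h1 : ∀ e : EdgeType n, (PMF.bernoulli (min (Real.toNNReal p) 1) (min_le_right _ _)).toMeasure
      (if e ∈ F then {true} else Set.univ) = if e ∈ F then (ENNReal.ofReal p) else 1 := by
    intro e
    by_cases he : e ∈ F
    · simp only [he, if_true]
      rw [PMF.toMeasure_apply_singleton _ _ (measurableSet_singleton _)]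
      rw [PMF.bernoulli_apply]
      simp only [cond_true]
      rw [hq]; rfl
    · simp only [he, if_false]
      exact measure_univ
  simp_rw [h1]
  rw [Finset.prod_ite]
  simp [ENNReal.toReal_ofReal hp0.le]

theorem er_mgf {n : ℕ} {p : ℝ} (hp0 : 0 < p) (hp1 : p < 1) {ι : Type*} (I : Finset ι)
    (F : ι → Finset (EdgeType n)) (k : ℕ) (hk : ∀ w ∈ I, (F w).card = k)
    (hd : ∀ w ∈ I, ∀ w' ∈ I, w ≠ w' → Disjoint (F w) (F w')) (α γ : ℝ) :
    ∫ ω, ∏ w ∈ I, (α + γ * (if ∀ e ∈ F w, ω e = true then 1 else 0)) ∂(erMeasure n p) =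
      (α + γ * p ^ k) ^ I.card := by
  have := er_isProb n p
  have h1 : ∀ ω : EdgeType n → Bool,
      ∏ w ∈ I, (α + γ * (if ∀ e ∈ F w, ω e = true then 1 else 0)) =
      ∑ t ∈ I.powerset, (∏ w ∈ t, α) * ((∏ w ∈ I \ t, γ) *
        Set.indicator {ω | ∀ e ∈ (I \ t).biUnion F, ω e = true} (fun _ => (1 : ℝ)) ω) := by
    intro ω
    rw [Finset.prod_add]
    refine Finset.sum_congr rfl fun t _ => ?_
    rw [Finset.prod_mul_distrib]
    congr 2
    by_cases hall : ∀ e ∈ (I \ t).biUnion F, ω e = true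
    · rw [Set.indicator_of_mem (by exact hall)]
      apply Finset.prod_eq_one
      intro w hw
      rw [if_pos]
      intro e he
      exact hall e (Finset.mem_biUnion.2 ⟨w, hw, he⟩)
    · rw [Set.indicator_of_notMem (by exact hall)]
      push Not at hall
      obtain ⟨e, he, hne⟩ := hall
      obtain ⟨w, hw, hew⟩ := Finset.mem_biUnion.1 he
      apply Finset.prod_eq_zero hw
      rw [if_neg]
      intro hh
      exact hne (hh e hew)
  simp_rw [h1]
  rw [integral_finsetSum _ (fun t _ => Integrable.of_finite)]
  have h2 : (α + γ * p ^ k) ^ I.card = ∏ w ∈ I, (α + γ * p ^ k) := by simp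
  rw [h2, Finset.prod_add]
  refine Finset.sum_congr rfl fun t _ => ?_
  rw [integral_const_mul, integral_const_mul, Finset.prod_mul_distrib]
  congr 2
  have hone := integral_indicator_one (μ := erMeasure n p)
    (Set.toFinite {ω | ∀ e ∈ (I \ t).biUnion F, ω e = true}).measurableSet
  refine hone.trans ?_
  rw [er_cyl hp0 hp1, Finset.card_biUnion,
    Finset.sum_congr rfl (g := fun _ => k)]
  · simp [pow_mul, mul_comm]
  · intro w hw; exact hk w (Finset.mem_sdiff.1 hw).1
  · intro w hw w' hw' hne
    exact hd w (Finset.mem_sdiff.1 hw).1 w' (Finset.mem_sdiff.1 hw').1 hne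

theorem er_markov {n : ℕ} {p : ℝ} (Y : (EdgeType n → Bool) → ℝ) (hY : ∀ ω, 0 ≤ Y ω)
    (E : Set (EdgeType n → Bool)) (a : ℝ) (ha : 0 < a) (hE : ∀ ω ∈ E, a⁻¹ ≤ Y ω) :
    (erMeasure n p).real E ≤ a * ∫ ω, Y ω ∂(erMeasure n p) := by
  have := er_isProb n p
  have h1 := mul_meas_ge_le_integral_of_nonneg (μ := erMeasure n p) (f := Y)
    (Filter.Eventually.of_forall hY) Integrable.of_finite a⁻¹
  have h2 : (erMeasure n p).real E ≤ (erMeasure n p).real {ω | a⁻¹ ≤ Y ω} :=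
    measureReal_mono (fun ω hω => hE ω hω)
  calc (erMeasure n p).real E = a * (a⁻¹ * (erMeasure n p).real E) := by field_simp
    _ ≤ a * (a⁻¹ * (erMeasure n p).real {ω | a⁻¹ ≤ Y ω}) := by gcongr
    _ ≤ _ := by gcongr

theorem half_pow_ge {j : ℕ} {b : ℝ} (hj : (j : ℝ) ≤ b) : ((2 : ℝ) ^ b)⁻¹ ≤ (1 / 2 : ℝ) ^ j := by
  rw [one_div, inv_pow]
  apply inv_anti₀ (by positivity)
  rw [← Real.rpow_natCast]
  exact Real.rpow_le_rpow_of_exponent_le (by norm_num) hj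

theorem er_few {n : ℕ} {p : ℝ} (hp0 : 0 < p) (hp1 : p < 1) {ι : Type*} (I : Finset ι)
    (F : ι → Finset (EdgeType n)) (k : ℕ) (hk : ∀ w ∈ I, (F w).card = k)
    (hd : ∀ w ∈ I, ∀ w' ∈ I, w ≠ w' → Disjoint (F w) (F w')) (b : ℝ) :
    (erMeasure n p).real {ω | ((I.filter (fun w => ∀ e ∈ F w, ω e = true)).card : ℝ) ≤ b} ≤
      2 ^ b * (1 - p ^ k / 2) ^ I.card := by
  have h1 := er_mgf hp0 hp1 I F k hk hd 1 (-1 / 2)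
  have e : (1 + -1 / 2 * p ^ k : ℝ) = 1 - p ^ k / 2 := by ring
  rw [e] at h1
  rw [← h1]
  have hprod : ∀ ω : EdgeType n → Bool,
      ∏ w ∈ I, ((1 : ℝ) + -1 / 2 * (if ∀ e ∈ F w, ω e = true then 1 else 0)) =
      (1 / 2) ^ (I.filter (fun w => ∀ e ∈ F w, ω e = true)).card := by
    intro ω
    rw [← Finset.prod_const, Finset.prod_filter]
    refine Finset.prod_congr rfl fun w _ => ?_
    split_ifs <;> norm_num
  apply er_markov
  · intro ω; rw [hprod]; positivity
  · positivity
  · intro ω hω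
    rw [hprod]
    exact half_pow_ge hω

theorem er_few' {n : ℕ} {p : ℝ} (hp0 : 0 < p) (hp1 : p < 1) {ι : Type*} (I : Finset ι)
    (F : ι → Finset (EdgeType n)) (k : ℕ) (hk : ∀ w ∈ I, (F w).card = k)
    (hd : ∀ w ∈ I, ∀ w' ∈ I, w ≠ w' → Disjoint (F w) (F w')) (b : ℝ) :
    (erMeasure n p).real {ω | ((I.filter (fun w => ¬ ∀ e ∈ F w, ω e = true)).card : ℝ) ≤ b} ≤
      2 ^ b * ((1 + p ^ k) / 2) ^ I.card := by
  have h1 := er_mgf hp0 hp1 I F k hk hd (1 / 2) (1 / 2)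
  have e : (1 / 2 + 1 / 2 * p ^ k : ℝ) = (1 + p ^ k) / 2 := by ring
  rw [e] at h1
  rw [← h1]
  have hprod : ∀ ω : EdgeType n → Bool,
      ∏ w ∈ I, ((1 / 2 : ℝ) + 1 / 2 * (if ∀ e ∈ F w, ω e = true then 1 else 0)) =
      (1 / 2) ^ (I.filter (fun w => ¬ ∀ e ∈ F w, ω e = true)).card := by
    intro ω
    rw [← Finset.prod_const, Finset.prod_filter]
    refine Finset.prod_congr rfl fun w _ => ?_
    by_cases hw : ∀ e ∈ F w, ω e = true
    · rw [if_pos hw, if_neg (not_not.2 hw)]; norm_num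
    · rw [if_neg hw, if_pos hw]; norm_num
  apply er_markov
  · intro ω; rw [hprod]; positivity
  · positivity
  · intro ω hω
    rw [hprod]
    exact half_pow_ge hω

/-- The set (of size one) of edges with prescribed end points. -/
noncomputable def edg {n : ℕ} (a b : Fin n) : Finset (EdgeType n) :=
  Finset.univ.filter (fun e => e.1 = s(a, b))

theorem edg_card {n : ℕ} {a b : Fin n} (hab : a ≠ b) : (edg a b).card = 1 := by
  rw [Finset.card_eq_one]
  refine ⟨⟨s(a, b), by simpa using hab⟩, ?_⟩
  ext e
  simp [edg, Subtype.ext_iff]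

theorem graphOf_adj {n : ℕ} (ω : EdgeType n → Bool) {a b : Fin n} (hab : a ≠ b) :
    (graphOf ω).Adj a b ↔ ∀ e ∈ edg a b, ω e = true := by
  rw [graphOf, SimpleGraph.fromEdgeSet_adj]
  constructor
  · rintro ⟨⟨h, hω⟩, _⟩ e he
    have : e = ⟨s(a, b), h⟩ := Subtype.ext (Finset.mem_filter.1 he).2
    rw [this]; exact hω
  · intro hall
    refine ⟨⟨by simpa using hab, ?_⟩, hab⟩
    apply hall
    simp [edg]

theorem edg_disj {n : ℕ} {a b c d : Fin n} (h : s(a, b) ≠ s(c, d)) :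
    Disjoint (edg a b) (edg c d) := by
  rw [Finset.disjoint_left]
  intro e h1 h2
  exact h ((Finset.mem_filter.1 h1).2.symm.trans (Finset.mem_filter.1 h2).2)

theorem prod_disj {n : ℕ} {A B : Finset (Fin n)} (hAB : Disjoint A B) :
    ∀ w ∈ A ×ˢ B, ∀ w' ∈ A ×ˢ B, w ≠ w' → Disjoint (edg w.1 w.2) (edg w'.1 w'.2) := by
  intro w hw w' hw' hne
  apply edg_disj
  intro he
  rw [Finset.mem_product] at hw hw'
  rw [Sym2.eq_iff] at he
  rcases he with ⟨h1, h2⟩ | ⟨h1, h2⟩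
  · exact hne (Prod.ext h1 h2)
  · exact Finset.disjoint_left.1 hAB hw.1 (h1 ▸ hw'.2)

theorem card_prod_filter {V : Type*} {A B : Finset V} {r : V → V → Prop} {β : ℝ}
    (h : ∀ x ∈ A, ((B.filter (fun y => r x y)).card : ℝ) ≤ β * B.card) :
    (((A ×ˢ B).filter (fun w => r w.1 w.2)).card : ℝ) ≤ β * (A.card * B.card : ℕ) := by
  have e : ((A ×ˢ B).filter (fun w => r w.1 w.2)).card = ∑ x ∈ A, (B.filter (fun y => r x y)).card := by
    rw [Finset.card_filter, Finset.sum_product]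
    refine Finset.sum_congr rfl fun x _ => ?_
    rw [Finset.card_filter]
  rw [e]
  push_cast
  calc ∑ x ∈ A, ((B.filter (fun y => r x y)).card : ℝ) ≤ ∑ x ∈ A, β * B.card := Finset.sum_le_sum h
    _ = _ := by rw [Finset.sum_const, nsmul_eq_mul]; ring

theorem er_pair {n : ℕ} {p β ν : ℝ} (hp0 : 0 < p) (hp1 : p < 1) (hν : 1 - p / 2 ≤ ν)
    (A B : Finset (Fin n)) (hAB : Disjoint A B) :
    (erMeasure n p).real {ω | ∀ x ∈ A,
      ((B.filter (fun y => (graphOf ω).Adj x y)).card : ℝ) ≤ β * B.card} ≤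
      (2 ^ β * ν) ^ (A.card * B.card) := by
  have := er_isProb n p
  have h1 := er_few hp0 hp1 (A ×ˢ B) (fun w => edg w.1 w.2) 1 (by
    intro w hw
    rw [Finset.mem_product] at hw
    apply edg_card
    intro e
    exact Finset.disjoint_left.1 hAB hw.1 (e ▸ hw.2)) (prod_disj hAB) (β * (A.card * B.card : ℕ))
  refine (measureReal_mono ?_).trans (h1.trans ?_)
  · intro ω hω
    rw [Set.mem_ofPred_eq] at hω ⊢
    refine le_trans (le_of_eq ?_) (card_prod_filter hω)
    congr 2
    apply Finset.filter_congr
    intro w hw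
    rw [Finset.mem_product] at hw
    rw [graphOf_adj]
    intro e
    exact Finset.disjoint_left.1 hAB hw.1 (e ▸ hw.2)
  · rw [mul_pow, ← Real.rpow_natCast ((2 : ℝ) ^ β), ← Real.rpow_mul (by norm_num),
      Finset.card_product, pow_one]
    gcongr
    linarith

theorem er_pair' {n : ℕ} {p β ν : ℝ} (hp0 : 0 < p) (hp1 : p < 1) (hν : (1 + p) / 2 ≤ ν)
    (A B : Finset (Fin n)) (hAB : Disjoint A B) :
    (erMeasure n p).real {ω | ∀ x ∈ A,
      ((@Finset.filter _ (fun y => (graphOf ω)ᶜ.Adj x y) (fun _ => propDecidable _) B).card : ℝ) ≤ β * B.card} ≤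
      (2 ^ β * ν) ^ (A.card * B.card) := by
  have := er_isProb n p
  have h1 := er_few' hp0 hp1 (A ×ˢ B) (fun w => edg w.1 w.2) 1 (by
    intro w hw
    rw [Finset.mem_product] at hw
    apply edg_card
    intro e
    exact Finset.disjoint_left.1 hAB hw.1 (e ▸ hw.2)) (prod_disj hAB) (β * (A.card * B.card : ℕ))
  refine (measureReal_mono ?_).trans (h1.trans ?_)
  · intro ω hω
    rw [Set.mem_ofPred_eq] at hω ⊢
    refine le_trans (le_of_eq ?_) (card_prod_filter (r := fun x y => (graphOf ω)ᶜ.Adj x y) hω)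
    congr 2
    ext w
    simp only [Finset.mem_filter]
    refine and_congr_right fun hw => ?_
    rw [Finset.mem_product] at hw
    have hne : w.1 ≠ w.2 := by
      intro e
      exact Finset.disjoint_left.1 hAB hw.1 (e ▸ hw.2)
    rw [SimpleGraph.compl_adj, graphOf_adj ω hne]
    tauto
  · rw [mul_pow, ← Real.rpow_natCast ((2 : ℝ) ^ β), ← Real.rpow_mul (by norm_num),
      Finset.card_product, pow_one]
    gcongr

theorem er_codeg {n : ℕ} {p β ν : ℝ} (hp0 : 0 < p) (hp1 : p < 1) (hν : 1 - p ^ 2 / 2 ≤ ν)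
    (z h : Fin n) (hzh : z ≠ h) :
    (erMeasure n p).real {ω | ((Finset.univ.filter
      (fun w => (graphOf ω).Adj z w ∧ (graphOf ω).Adj h w)).card : ℝ) ≤ β * n} ≤
      (2 ^ β * ν) ^ n / ν ^ 2 := by
  have := er_isProb n p
  have hν0 : 0 < ν := by nlinarith
  let I : Finset (Fin n) := (Finset.univ.erase z).erase h
  have hI : ∀ w ∈ I, w ≠ h ∧ w ≠ z := by intro w hw; simpa [I] using hw
  have hIc : I.card + 2 = n := by
    have h2 : ({z, h} : Finset (Fin n)).card ≤ n := by
      simpa using Finset.card_le_univ ({z, h} : Finset (Fin n))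
    rw [Finset.card_pair hzh] at h2
    simp only [I]
    rw [Finset.card_erase_of_mem (by simp [hzh.symm]), Finset.card_erase_of_mem (by simp),
      Finset.card_univ, Fintype.card_fin]
    omega
  have h1 := er_few hp0 hp1 I (fun w => edg z w ∪ edg h w) 2 (by
    intro w hw
    rw [Finset.card_union_of_disjoint, edg_card (hI w hw).2.symm, edg_card (hI w hw).1.symm]
    apply edg_disj
    intro e
    rw [Sym2.eq_iff] at e
    have := hI w hw
    rcases e with ⟨e, _⟩ | ⟨e, _⟩
    · exact hzh e
    · exact this.2 e.symm) (by
    intro w hw w' hw' hne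
    have a1 := hI w hw
    have a2 := hI w' hw'
    have key : ∀ u v : Fin n, v ≠ w → u ≠ w' → s(u, w) ≠ s(v, w') := by
      intro u v h1 h2 e
      rw [Sym2.eq_iff] at e
      rcases e with ⟨_, e⟩ | ⟨e, _⟩
      · exact hne e
      · exact h2 e
    rw [Finset.disjoint_union_left, Finset.disjoint_union_right, Finset.disjoint_union_right]
    refine ⟨⟨edg_disj ?_, edg_disj ?_⟩, ⟨edg_disj ?_, edg_disj ?_⟩⟩
    · exact key _ _ a1.2.symm a2.2.symm
    · exact key _ _ a1.1.symm a2.2.symm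
    · exact key _ _ a1.2.symm a2.1.symm
    · exact key _ _ a1.1.symm a2.1.symm) (β * n)
  refine (measureReal_mono ?_).trans (h1.trans ?_)
  · intro ω hω
    rw [Set.mem_ofPred_eq] at hω ⊢
    refine le_trans ?_ hω
    norm_cast
    apply Finset.card_le_card
    intro w hw
    rw [Finset.mem_filter] at hw ⊢
    refine ⟨Finset.mem_univ _, ?_⟩
    have := hI w hw.1
    rw [graphOf_adj ω this.2.symm, graphOf_adj ω this.1.symm]
    exact ⟨fun e he => hw.2 e (Finset.mem_union_left _ he),
      fun e he => hw.2 e (Finset.mem_union_right _ he)⟩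
  · rw [le_div_iff₀ (by positivity), mul_pow, ← Real.rpow_natCast ((2 : ℝ) ^ β),
      ← Real.rpow_mul (by norm_num), mul_assoc]
    gcongr
    calc (1 - p ^ 2 / 2) ^ I.card * ν ^ 2 ≤ ν ^ I.card * ν ^ 2 := by
          gcongr
          nlinarith
      _ = ν ^ n := by rw [← pow_add, hIc]

end Prob


section Union
open Classical

theorem sum_pow_card (n : ℕ) (r : ℝ) :
    ∑ A : Finset (Fin n), r ^ A.card = (1 + r) ^ n := by
  have h1 := Finset.prod_add (fun _ : Fin n => r) (fun _ => (1 : ℝ)) Finset.univ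
  simp only [Finset.prod_const, Finset.card_univ, Fintype.card_fin, one_pow, mul_one,
    Finset.powerset_univ] at h1
  rw [← h1, add_comm]

theorem rp_fail {n s : ℕ} {p β θ : ℝ} (X : (EdgeType n → Bool) → SimpleGraph (Fin n))
    (hn : 1 ≤ n) (hs : 1 ≤ s) (hθ0 : 0 ≤ θ) (hθ1 : θ ≤ 1) (hθs : θ ^ s ≤ (1 / (n : ℝ)) ^ 4)
    (hX : ∀ A B : Finset (Fin n), Disjoint A B → (erMeasure n p).real {ω | ∀ x ∈ A,
      ((@Finset.filter _ (fun y => (X ω).Adj x y) (fun _ => propDecidable _) B).card : ℝ)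
        ≤ β * B.card} ≤ θ ^ (A.card * B.card)) :
    (erMeasure n p).real {ω | ¬ Rp (X ω) β s} ≤ Real.exp 2 / n := by
  have := er_isProb n p
  have hn0 : (0 : ℝ) < n := by exact_mod_cast hn
  have hr1 : 1 / (n : ℝ) ≤ 1 := by
    rw [div_le_one hn0]; exact_mod_cast hn
  have hr0 : 0 ≤ 1 / (n : ℝ) := by positivity
  let W : Finset (Finset (Fin n) × Finset (Fin n)) := (Finset.univ ×ˢ Finset.univ).filter
    (fun w => Disjoint w.1 w.2 ∧ s ≤ w.1.card ∧ s ≤ w.2.card)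
  let E : Finset (Fin n) × Finset (Fin n) → Set (EdgeType n → Bool) := fun w => {ω | ∀ x ∈ w.1,
      ((@Finset.filter _ (fun y => (X ω).Adj x y) (fun _ => propDecidable _) w.2).card : ℝ)
        ≤ β * w.2.card}
  have hsub : {ω | ¬ Rp (X ω) β s} ⊆ ⋃ w ∈ W, E w := by
    intro ω hω
    rw [Set.mem_ofPred_eq, Rp] at hω
    push Not at hω
    obtain ⟨A, B, hAB, hA, hB, hx⟩ := hω
    refine Set.mem_biUnion (x := (A, B)) ?_ ?_
    · simp only [W, Finset.coe_filter, Set.mem_ofPred_eq]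
      exact ⟨by simp, hAB, hA, hB⟩
    · simp only [E, Set.mem_ofPred_eq]
      exact fun x hxA => (hx x hxA).le
  refine (measureReal_mono hsub (measure_ne_top _ _)).trans ((measureReal_biUnion_finset_le W E).trans ?_)
  have hterm : ∀ w ∈ W, (erMeasure n p).real (E w) ≤
      1 / (n : ℝ) * ((1 / (n : ℝ)) ^ w.1.card * (1 / (n : ℝ)) ^ w.2.card) := by
    intro w hw
    obtain ⟨-, hd, h1, h2⟩ := Finset.mem_filter.1 hw
    refine (hX w.1 w.2 hd).trans ?_
    have e1 : (θ ^ (w.1.card * w.2.card)) ^ 2 ≤ ((1 / (n : ℝ)) ^ (2 * (w.1.card + w.2.card))) ^ 2 := by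
      calc (θ ^ (w.1.card * w.2.card)) ^ 2 = θ ^ (w.1.card * w.2.card * 2) := (pow_mul _ _ _).symm
        _ ≤ θ ^ (s * (w.1.card + w.2.card)) := by
          apply pow_le_pow_of_le_one hθ0 hθ1
          nlinarith
        _ = (θ ^ s) ^ (w.1.card + w.2.card) := by rw [pow_mul]
        _ ≤ ((1 / (n : ℝ)) ^ 4) ^ (w.1.card + w.2.card) := by gcongr
        _ = _ := by rw [← pow_mul, ← pow_mul]; congr 1; ring
    have e2 := (pow_le_pow_iff_left₀ (by positivity) (by positivity) (by norm_num)).1 e1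
    refine e2.trans ?_
    calc (1 / (n : ℝ)) ^ (2 * (w.1.card + w.2.card))
        ≤ (1 / (n : ℝ)) ^ (1 + (w.1.card + w.2.card)) :=
          pow_le_pow_of_le_one hr0 hr1 (by omega)
      _ = _ := by rw [pow_add, pow_add, pow_one]
  refine (Finset.sum_le_sum hterm).trans ?_
  refine (Finset.sum_le_sum_of_subset_of_nonneg (Finset.filter_subset _ _)
    (fun _ _ _ => by positivity)).trans ?_
  rw [← Finset.mul_sum, Finset.sum_product]
  simp_rw [← Finset.mul_sum, sum_pow_card, ← Finset.sum_mul, sum_pow_card]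
  rw [div_mul_eq_mul_div, one_mul]
  gcongr
  have h3 : (1 + 1 / (n : ℝ)) ^ n ≤ Real.exp 1 := by
    have h4 : 1 + 1 / (n : ℝ) ≤ Real.exp (1 / n) := by
      rw [add_comm]; exact Real.add_one_le_exp _
    calc (1 + 1 / (n : ℝ)) ^ n ≤ Real.exp (1 / n) ^ n := by gcongr
      _ = Real.exp 1 := by rw [← Real.exp_nat_mul]; congr 1; field_simp
  calc (1 + 1 / (n : ℝ)) ^ n * (1 + 1 / (n : ℝ)) ^ n ≤ Real.exp 1 * Real.exp 1 := by gcongr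
    _ = Real.exp 2 := by rw [← Real.exp_add]; norm_num

theorem codeg_fail {n : ℕ} {p β ν : ℝ} (hp0 : 0 < p) (hp1 : p < 1) (hν : 1 - p ^ 2 / 2 ≤ ν) :
    (erMeasure n p).real {ω | ¬ Codeg (graphOf ω) β} ≤ n ^ 2 * ((2 ^ β * ν) ^ n / ν ^ 2) := by
  have := er_isProb n p
  have hν0 : 0 < ν := by nlinarith
  let W : Finset (Fin n × Fin n) := (Finset.univ ×ˢ Finset.univ).filter (fun w => w.1 ≠ w.2)
  let E : Fin n × Fin n → Set (EdgeType n → Bool) := fun w => {ω | ((Finset.univ.filter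
      (fun u => (graphOf ω).Adj w.1 u ∧ (graphOf ω).Adj w.2 u)).card : ℝ) ≤ β * n}
  have hsub : {ω | ¬ Codeg (graphOf ω) β} ⊆ ⋃ w ∈ W, E w := by
    intro ω hω
    rw [Set.mem_ofPred_eq, Codeg] at hω
    push Not at hω
    obtain ⟨z, h, hzh, hx⟩ := hω
    refine Set.mem_biUnion (x := (z, h)) ?_ ?_
    · simp only [W, Finset.coe_filter, Set.mem_ofPred_eq]
      exact ⟨by simp, hzh⟩
    · simp only [E, Set.mem_ofPred_eq]
      rw [Fintype.card_fin] at hx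
      refine le_trans (le_of_eq ?_) hx.le
      congr!
  refine (measureReal_mono hsub (measure_ne_top _ _)).trans ((measureReal_biUnion_finset_le W E).trans ?_)
  refine (Finset.sum_le_sum (fun w hw => er_codeg hp0 hp1 hν w.1 w.2
    (Finset.mem_filter.1 hw).2)).trans ?_
  rw [Finset.sum_const, nsmul_eq_mul]
  gcongr
  have h1 : W.card ≤ n ^ 2 := by
    refine (Finset.card_filter_le _ _).trans ?_
    simp [Finset.card_product, sq]
  exact_mod_cast h1

theorem exists_beta {ν : ℝ} (hν0 : 0 < ν) (hν1 : ν < 1) :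
    ∃ β : ℝ, 0 < β ∧ β ≤ 1 ∧ (2 : ℝ) ^ β * ν < 1 := by
  have h1 : ContinuousAt (fun β : ℝ => (2 : ℝ) ^ β * ν) 0 := by
    apply ContinuousAt.mul _ continuousAt_const
    exact Real.continuousAt_const_rpow (by norm_num)
  have h2 : ∀ᶠ β in nhds (0 : ℝ), (2 : ℝ) ^ β * ν < 1 := by
    apply h1.eventually_lt continuousAt_const
    simpa using hν1
  obtain ⟨ε, hε, hb⟩ := Metric.eventually_nhds_iff.1 h2
  refine ⟨min 1 (ε / 2), by positivity, min_le_left _ _, hb ?_⟩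
  rw [Real.dist_eq, sub_zero, abs_of_pos (by positivity)]
  exact lt_of_le_of_lt (min_le_right _ _) (by linarith)

/-- All the pseudorandom properties needed hold with high probability. -/
theorem er_good {p : ℝ} (hp0 : 0 < p) (hp1 : p < 1) :
    ∃ β θ ν : ℝ, 0 < β ∧ β ≤ 1 ∧ 0 < θ ∧ θ < 1 ∧ 0 < ν ∧ ∀ n s : ℕ, 1 ≤ n → 1 ≤ s →
      θ ^ s ≤ (1 / (n : ℝ)) ^ 4 →
      (erMeasure n p).real {ω | ¬ (Rp (graphOf ω) β s ∧ Rp (graphOf ω)ᶜ β s ∧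
        Codeg (graphOf ω) β)} ≤ 2 * (Real.exp 2 / n) + n ^ 2 * (θ ^ n / ν ^ 2) := by
  let ν : ℝ := max ((1 + p) / 2) (1 - p ^ 2 / 2)
  have hν0 : 0 < ν := lt_max_of_lt_left (by linarith)
  have hν1 : ν < 1 := max_lt (by linarith) (by nlinarith)
  obtain ⟨β, hβ0, hβ1, hθ⟩ := exists_beta hν0 hν1
  have hθ0 : 0 < (2 : ℝ) ^ β * ν := by positivity
  refine ⟨β, 2 ^ β * ν, ν, hβ0, hβ1, hθ0, hθ, hν0, ?_⟩
  intro n s hn hs hθs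
  have := er_isProb n p
  have h1 := rp_fail (p := p) (β := β) (fun ω => graphOf ω) hn hs hθ0.le hθ.le hθs (by
    intro A B hAB
    exact er_pair hp0 hp1 (le_trans (by nlinarith) (le_max_right _ _)) A B hAB)
  have h2 := rp_fail (p := p) (β := β) (fun ω => (graphOf ω)ᶜ) hn hs hθ0.le hθ.le hθs (by
    intro A B hAB
    exact er_pair' hp0 hp1 (le_max_left _ _) A B hAB)
  have h3 := codeg_fail (n := n) (β := β) (ν := ν) hp0 hp1 (le_max_right _ _)
  have hsub : {ω | ¬ (Rp (graphOf ω) β s ∧ Rp (graphOf ω)ᶜ β s ∧ Codeg (graphOf ω) β)} ⊆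
      ({ω : EdgeType n → Bool | ¬ Rp (graphOf ω) β s} ∪ {ω | ¬ Rp (graphOf ω)ᶜ β s}) ∪
        {ω | ¬ Codeg (graphOf ω) β} := by
    intro ω hω
    simp only [Set.mem_union, Set.mem_ofPred_eq] at hω ⊢
    tauto
  have h4 := measureReal_mono (μ := erMeasure n p) hsub
  have h5 := measureReal_union_le (μ := erMeasure n p)
    ({ω : EdgeType n → Bool | ¬ Rp (graphOf ω) β s} ∪ {ω | ¬ Rp (graphOf ω)ᶜ β s})
    {ω | ¬ Codeg (graphOf ω) β}
  have h6 := measureReal_union_le (μ := erMeasure n p)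
    {ω : EdgeType n → Bool | ¬ Rp (graphOf ω) β s} {ω | ¬ Rp (graphOf ω)ᶜ β s}
  linarith

end Union


theorem ev_log (C : ℝ) : ∀ᶠ n : ℕ in atTop, C * Real.log n ≤ (n : ℝ) ^ (1 / 8 : ℝ) := by
  have h1 := (isLittleO_log_rpow_atTop (r := 1 / 8) (by norm_num)).comp_tendsto
    (tendsto_natCast_atTop_atTop (R := ℝ))
  have h2 := h1.bound (c := 1 / (|C| + 1)) (by positivity)
  filter_upwards [h2] with n hn
  simp only [Function.comp] at hn
  have h3 : ‖(n : ℝ) ^ (1 / 8 : ℝ)‖ = (n : ℝ) ^ (1 / 8 : ℝ) := by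
    rw [Real.norm_eq_abs, abs_of_nonneg (by positivity)]
  rw [h3, div_mul_eq_mul_div, one_mul, le_div_iff₀ (by positivity), Real.norm_eq_abs] at hn
  have h4 : C * Real.log n ≤ |C| * |Real.log n| := by
    rw [← abs_mul]; exact le_abs_self _
  nlinarith [abs_nonneg (Real.log n)]

theorem ev_log_ge (D : ℝ) : ∀ᶠ n : ℕ in atTop, D ≤ Real.log n :=
  (Real.tendsto_log_atTop.comp (tendsto_natCast_atTop_atTop (R := ℝ))).eventually_ge_atTop D

set_option maxHeartbeats 2000000 in
/-- Choice of the parameters. -/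
theorem num_choice {β θ : ℝ} {m : ℕ} (hβ : 0 < β) (hβ1 : β ≤ 1) (hθ0 : 0 < θ) (hθ1 : θ < 1)
    (hm : 5 ≤ m) : ∃ c₁ > (0 : ℝ), ∃ c₂ > (0 : ℝ), ∀ᶠ n : ℕ in atTop, ∃ s l t N : ℕ,
      1 ≤ n ∧ 1 ≤ s ∧ 1 ≤ l ∧ 1 ≤ t ∧ s ≤ t ∧ θ ^ s ≤ (1 / (n : ℝ)) ^ 4 ∧
      2 * (s : ℝ) ≤ (β / 2) ^ l * (β * t) ∧
      (((N + s) * (m - 2) : ℕ) : ℝ) ≤ β * n / 2 ∧ N + 1 ≤ n ∧ s ≤ N * (m - 2) ∧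
      (s : ℝ) ≤ β * n / 4 ∧ 2 * (s : ℝ) ≤ (β / 2) ^ (m - 3) * (β * (β * n / 4)) ∧
      n + l * s ≤ l * (N * (m - 2)) ∧
      ((n + (N + s) * m ^ 2 + t * (t + l) : ℕ) : ℝ) ≤ n + c₂ * n / Real.log n ∧
      ∀ e : ℕ, n + 8 * s * (2 * m) * (2 * n) ≤ 8 * s * (2 * m) * (2 * e + 3) +
          4 * s * ((2 * m + 2) * s) + (8 * s * s + 6 * s + 1) →
        (n : ℝ) + c₁ * n / Real.log n ≤ e := by
  have hlθ : 0 < -Real.log θ := by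
    have := Real.log_neg hθ0 hθ1; linarith
  have hlβ : 0 < Real.log (2 / β) := Real.log_pos (by rw [lt_div_iff₀ hβ]; linarith)
  obtain ⟨K, hK⟩ : ∃ K : ℝ, K = 4 / (-Real.log θ) := ⟨_, rfl⟩
  obtain ⟨c, hc⟩ : ∃ c : ℝ, c = 1 / (8 * Real.log (2 / β)) := ⟨_, rfl⟩
  have hK0 : 0 < K := by rw [hK]; positivity
  have hc0 : 0 < c := by rw [hc]; positivity
  have hm0 : (5 : ℝ) ≤ m := by exact_mod_cast hm
  let D : ℝ := (β / 2) ^ (m - 3) * (β * (β / 4))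
  have hD0 : 0 < D := by positivity
  refine ⟨1 / (128 * K * m), by positivity, (2 / c + 1) * m ^ 2 + 1, by positivity, ?_⟩
  filter_upwards [eventually_ge_atTop 1, ev_log_ge 1, ev_log_ge (1 / K), ev_log_ge (2 / c),
    ev_log_ge (2 * (2 / c + 1) * m / β), ev_log (4 * K / β), ev_log (1 + 4 * K), ev_log 6,
    ev_log c, ev_log (2 * K), ev_log (8 * K / β), ev_log (4 * K / D),
    ev_log (8 * (56 * m + 23) * K ^ 2), ev_log 1] with n hn1 hL1 hLK hLc hLβ a1 a2 a3 a4 a5 a6 a7 a8 a9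
  have hn0 : (0 : ℝ) < n := by exact_mod_cast hn1
  have hexpL : Real.exp (Real.log n) = n := Real.exp_log hn0
  obtain ⟨L, hL⟩ : ∃ L, L = Real.log n := ⟨_, rfl⟩
  obtain ⟨y, hy⟩ : ∃ y, y = (n : ℝ) ^ (1 / 8 : ℝ) := ⟨_, rfl⟩
  have hy8 : y ^ 8 = n := by
    rw [hy, ← Real.rpow_natCast, ← Real.rpow_mul hn0.le]; norm_num
  have hyexp : y = Real.exp (L / 8) := by
    rw [hy, Real.rpow_def_of_pos hn0, hL]; congr 1; ring
  rw [← hL] at hL1 hLK hLc hLβ a1 a2 a3 a4 a5 a6 a7 a8 a9 hexpL ⊢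
  rw [← hy] at a1 a2 a3 a4 a5 a6 a7 a8 a9
  have hL0 : 0 < L := by linarith
  have hy1 : 1 ≤ y := by linarith
  have hy0 : 0 < y := by linarith
  have hp2 : y ≤ y ^ 2 := le_self_pow₀ hy1 (by norm_num)
  have hp28 : y ^ 2 ≤ n := by rw [← hy8]; exact pow_le_pow_right₀ hy1 (by norm_num)
  have hp18 : y ≤ n := hp2.trans hp28
  have hKL : 1 ≤ K * L := by rw [div_le_iff₀ hK0] at hLK; linarith
  let s : ℕ := ⌈K * L⌉₊
  let l : ℕ := ⌊c * L⌋₊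
  let t : ℕ := ⌈y ^ 2⌉₊
  let N : ℕ := ⌈(n : ℝ) / l⌉₊ + s
  have hsK : K * L ≤ s := Nat.le_ceil _
  have hs2 : (s : ℝ) ≤ 2 * K * L := by
    have := Nat.ceil_lt_add_one (a := K * L) (by positivity)
    simp only [s]; linarith
  have hs1 : 1 ≤ s := Nat.one_le_ceil_iff.2 (by positivity)
  have hs1' : (1 : ℝ) ≤ s := by exact_mod_cast hs1
  have hcL : 2 ≤ c * L := by rw [div_le_iff₀ hc0] at hLc; linarith
  have hl1 : (l : ℝ) ≤ c * L := Nat.floor_le (by positivity)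
  have hl2 : c * L / 2 ≤ l := by
    have := Nat.lt_floor_add_one (c * L)
    simp only [l]; linarith
  have hl3' : (1 : ℝ) ≤ l := by linarith
  have hl3 : 1 ≤ l := by exact_mod_cast hl3'
  have ht1 : y ^ 2 ≤ t := Nat.le_ceil _
  have ht2 : (t : ℝ) ≤ 2 * y ^ 2 := by
    have := Nat.ceil_lt_add_one (a := y ^ 2) (by positivity)
    simp only [t]; linarith
  have ht3' : (1 : ℝ) ≤ t := by linarith
  have ht3 : 1 ≤ t := by exact_mod_cast ht3'
  have hnL : L ≤ n := by linarith
  -- bound on N + s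
  have hNs : ((N + s : ℕ) : ℝ) ≤ (2 / c + 1) * n / L := by
    have h1 : (n : ℝ) / l ≤ 2 / c * n / L := by
      rw [div_le_div_iff₀ (by linarith) hL0]
      have h3 : 2 / c * n * (c * L / 2) ≤ 2 / c * n * l := by gcongr
      have h4 : 2 / c * n * (c * L / 2) = n * L := by field_simp
      linarith
    have h2 : (⌈(n : ℝ) / l⌉₊ : ℝ) < n / l + 1 := Nat.ceil_lt_add_one (by positivity)
    have h3 : 1 + 2 * (s : ℝ) ≤ n / L := by
      rw [le_div_iff₀ hL0]
      have h5 : (1 + 2 * (s : ℝ)) * L ≤ (1 + 4 * K * L) * L :=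
        mul_le_mul_of_nonneg_right (by linarith) hL0.le
      have h6 : (1 + 4 * K * L) * L ≤ ((1 + 4 * K) * L) * L := by gcongr; nlinarith
      have h7 : ((1 + 4 * K) * L) * L ≤ y * y := by gcongr; linarith
      nlinarith
    have h4 : (2 / c + 1) * n / L = 2 / c * n / L + n / L := by ring
    rw [h4]
    simp only [N]
    push_cast
    linarith
  have hNsm : (((N + s) * (m - 2) : ℕ) : ℝ) ≤ β * n / 2 := by
    have h1 : ((m - 2 : ℕ) : ℝ) ≤ m := by exact_mod_cast Nat.sub_le _ _
    rw [Nat.cast_mul]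
    calc ((N + s : ℕ) : ℝ) * ((m - 2 : ℕ) : ℝ) ≤ (2 / c + 1) * n / L * m := by gcongr
      _ ≤ β * n / 2 := by
        rw [div_le_iff₀ hβ] at hLβ
        rw [div_mul_eq_mul_div, div_le_div_iff₀ hL0 (by norm_num)]
        nlinarith
  have hm3 : 1 ≤ m - 2 := by omega
  refine ⟨s, l, t, N, hn1, hs1, hl3, ht3, ?_, ?_, ?_, hNsm, ?_, ?_, ?_, ?_, ?_, ?_, ?_⟩
  · have : (s : ℝ) ≤ t := by linarith
    exact_mod_cast this
  · have h1 : θ ^ s ≤ Real.exp (-(4 * L)) := by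
      rw [← Real.rpow_natCast, Real.rpow_def_of_pos hθ0]
      apply Real.exp_le_exp.2
      have h2 : K * (-Real.log θ) = 4 := by rw [hK, div_mul_cancel₀ _ hlθ.ne']
      have h3 : K * L * (-Real.log θ) ≤ s * (-Real.log θ) := by gcongr
      nlinarith
    refine h1.trans (le_of_eq ?_)
    rw [one_div, inv_pow, Real.exp_neg]
    congr 1
    rw [← hexpL, ← Real.exp_nat_mul]; norm_num
  · have h1 : Real.exp (-(L / 8)) ≤ (β / 2) ^ l := by
      rw [← Real.rpow_natCast, Real.rpow_def_of_pos (by positivity)]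
      apply Real.exp_le_exp.2
      have h2 : Real.log (β / 2) = -Real.log (2 / β) := by rw [← Real.log_inv, inv_div]
      rw [h2]
      have h3 : c * Real.log (2 / β) = 1 / 8 := by rw [hc]; field_simp
      have h4 : Real.log (2 / β) * l ≤ Real.log (2 / β) * (c * L) := by gcongr
      nlinarith
    have h2 : Real.exp (-(L / 8)) * (β * y ^ 2) = β * y := by
      rw [Real.exp_neg, ← hyexp]; field_simp
    rw [div_mul_eq_mul_div, div_le_iff₀ hβ] at a1
    calc 2 * (s : ℝ) ≤ β * y := by linarith
      _ = Real.exp (-(L / 8)) * (β * y ^ 2) := h2.symm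
      _ ≤ _ := by gcongr
  · have h1 : ((N + s : ℕ) : ℝ) ≤ (((N + s) * (m - 2) : ℕ) : ℝ) := by
      exact_mod_cast Nat.le_mul_of_pos_right _ hm3
    have h2 : ((N + s : ℕ) : ℝ) ≤ n := by nlinarith
    have h3 : N + s ≤ n := by exact_mod_cast h2
    omega
  · have : s ≤ N := by simp only [N]; omega
    exact this.trans (Nat.le_mul_of_pos_right _ hm3)
  · rw [div_mul_eq_mul_div, div_le_iff₀ hβ] at a6
    nlinarith
  · rw [div_mul_eq_mul_div, div_le_iff₀ hD0] at a7
    have h1 : (β / 2) ^ (m - 3) * (β * (β * n / 4)) = D * n := by simp only [D]; ring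
    rw [h1]
    nlinarith
  · have h1 : n + l * s ≤ l * N := by
      have h2 : (n : ℝ) ≤ l * ⌈(n : ℝ) / l⌉₊ := by
        have := Nat.le_ceil ((n : ℝ) / l)
        rw [div_le_iff₀ (by linarith)] at this
        linarith
      have h3 : n ≤ l * ⌈(n : ℝ) / l⌉₊ := by exact_mod_cast h2
      simp only [N]
      rw [mul_add]
      omega
    exact h1.trans (Nat.mul_le_mul_left _ (Nat.le_mul_of_pos_right _ hm3))
  · have h1 : (t : ℝ) * (t + l) ≤ n / L := by
      rw [le_div_iff₀ hL0]
      have h2 : (t : ℝ) * (t + l) ≤ (2 * y ^ 2) * (2 * y ^ 2 + y ^ 2) := by gcongr; linarith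
      have h3 : (t : ℝ) * (t + l) * L ≤ (2 * y ^ 2) * (2 * y ^ 2 + y ^ 2) * L := by gcongr
      have h4 : (2 * y ^ 2) * (2 * y ^ 2 + y ^ 2) * L = y ^ 4 * (6 * L) := by ring
      have h5 : y ^ 4 * (6 * L) ≤ y ^ 4 * y := by gcongr
      have h6 : y ^ 4 * y ≤ n := by
        rw [← hy8, ← pow_succ]; exact pow_le_pow_right₀ hy1 (by norm_num)
      linarith
    have h2 : ((N + s : ℕ) : ℝ) * m ^ 2 ≤ (2 / c + 1) * n / L * m ^ 2 := by gcongr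
    have h3 : ((2 / c + 1) * m ^ 2 + 1) * n / L = (2 / c + 1) * n / L * m ^ 2 + n / L := by ring
    rw [h3]
    push_cast at h2 ⊢
    linarith
  · intro e he
    have he' : (n : ℝ) + 8 * s * (2 * m) * (2 * n) ≤ 8 * s * (2 * m) * (2 * e + 3) +
          4 * s * ((2 * m + 2) * s) + (8 * s * s + 6 * s + 1) := by exact_mod_cast he
    have hss : (s : ℝ) ≤ s ^ 2 := by nlinarith
    have hs2K : (s : ℝ) ^ 2 ≤ (2 * K * L) ^ 2 := by gcongr
    have herr : (56 * m + 23) * (s : ℝ) ^ 2 ≤ n / 2 := by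
      have h1 : (56 * m + 23) * (s : ℝ) ^ 2 ≤ (56 * m + 23) * (2 * K * L) ^ 2 := by gcongr
      have h2 : (56 * m + 23) * (2 * K * L) ^ 2 = (8 * (56 * m + 23) * K ^ 2 * L) * L / 2 := by ring
      have h3 : (8 * (56 * m + 23) * K ^ 2 * L) * L ≤ y * y := by gcongr; linarith
      nlinarith
    have h1 : 48 * m * (s : ℝ) ≤ 48 * m * (s : ℝ) ^ 2 := by gcongr
    have h2 : (n : ℝ) / 2 ≤ 32 * s * m * (e - n) := by nlinarith
    have hmp : (0 : ℝ) < m := by linarith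
    have hen : 0 ≤ (e : ℝ) - n := by
      by_contra hcon
      push Not at hcon
      have : 32 * (s : ℝ) * m * (e - n) < 0 := mul_neg_of_pos_of_neg (by positivity) hcon
      linarith
    have h3 : 32 * (s : ℝ) * m * (e - n) ≤ 32 * (2 * K * L) * m * (e - n) := by gcongr
    have h4 : 1 / (128 * K * m) * n / L ≤ e - n := by
      rw [div_le_iff₀ hL0, div_mul_eq_mul_div, div_le_iff₀ (by positivity)]
      linarith
    linarith


theorem final_pt {n s l t N m : ℕ} {β θ c₁ c₂ : ℝ} (G : SimpleGraph (Fin n)) (hβ : 0 < β)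
    (hβ1 : β ≤ 1) (hm : 5 ≤ m) (hR : Rp G β s) (hR' : Rp Gᶜ β s) (hD : Codeg G β)
    (h : 1 ≤ n ∧ 1 ≤ s ∧ 1 ≤ l ∧ 1 ≤ t ∧ s ≤ t ∧ θ ^ s ≤ (1 / (n : ℝ)) ^ 4 ∧
      2 * (s : ℝ) ≤ (β / 2) ^ l * (β * t) ∧
      (((N + s) * (m - 2) : ℕ) : ℝ) ≤ β * n / 2 ∧ N + 1 ≤ n ∧ s ≤ N * (m - 2) ∧
      (s : ℝ) ≤ β * n / 4 ∧ 2 * (s : ℝ) ≤ (β / 2) ^ (m - 3) * (β * (β * n / 4)) ∧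
      n + l * s ≤ l * (N * (m - 2)) ∧
      ((n + (N + s) * m ^ 2 + t * (t + l) : ℕ) : ℝ) ≤ n + c₂ * n / Real.log n ∧
      ∀ e : ℕ, n + 8 * s * (2 * m) * (2 * n) ≤ 8 * s * (2 * m) * (2 * e + 3) +
          4 * s * ((2 * m + 2) * s) + (8 * s * s + 6 * s + 1) →
        (n : ℝ) + c₁ * n / Real.log n ≤ e) :
    (n : ℝ) + c₁ * n / Real.log n ≤ (satNum G (cycGraph m) : ℝ) ∧
      (satNum G (cycGraph m) : ℝ) ≤ (n : ℝ) + c₂ * n / Real.log n := by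
  obtain ⟨h1, h2, h3, h4, h5, -, h7, h8, h9, h10, h11, h12, h13, h14, h15⟩ := h
  constructor
  · apply h15
    obtain ⟨H, hsat, hH⟩ := satNum_attained G (cycGraph m) (bot_cycle_free m hm)
    have : Nonempty (Fin n) := ⟨⟨0, by omega⟩⟩
    have hl := lower_det (hR.noHole hβ h2) h2 hm (codeg_connected hD hβ) hsat
    rw [hH, Fintype.card_fin] at hl
    exact hl
  · refine le_trans ?_ h14
    have hu := upper_det (N := N) hR hR' hD hβ hβ1 hm h2 h3 h4 h5 h7
      (by rw [Fintype.card_fin]; exact h8) (by rw [Fintype.card_fin]; exact h9) h10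
      (by rw [Fintype.card_fin]; exact h11) (by rw [Fintype.card_fin]; exact h12)
      (by rw [Fintype.card_fin]; exact h13)
    rw [Fintype.card_fin] at hu
    exact_mod_cast hu

/-- For fixed `p ∈ (0,1)` and fixed `m ≥ 5`, there are constants
`c₁, c₂ > 0` such that whp `n + c₁·n/ln n ≤ sat(G(n,p), C_m) ≤ n + c₂·n/ln n`. -/
theorem cycle_saturation_theta (p : ℝ) (hp0 : 0 < p) (hp1 : p < 1)
    (m : ℕ) (hm : 5 ≤ m) :
    ∃ c₁ > (0 : ℝ), ∃ c₂ > (0 : ℝ),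
      Tendsto (fun n : ℕ =>
        erMeasure n p {ω |
          (n : ℝ) + c₁ * n / Real.log n ≤ (satNum (graphOf ω) (cycGraph m) : ℝ) ∧
          (satNum (graphOf ω) (cycGraph m) : ℝ) ≤ (n : ℝ) + c₂ * n / Real.log n})
        atTop (nhds 1) := by

  obtain ⟨β, θ, ν, hβ, hβ1, hθ0, hθ1, hν, hgood⟩ := er_good hp0 hp1
  obtain ⟨c₁, hc1, c₂, hc2, hev⟩ := num_choice hβ hβ1 hθ0 hθ1 hm
  refine ⟨c₁, hc1, c₂, hc2, ?_⟩
  have hδ : Tendsto (fun n : ℕ => 1 - (2 * (Real.exp 2 / n) + (n : ℝ) ^ 2 * (θ ^ n / ν ^ 2)))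
      atTop (nhds 1) := by
    have h1 : Tendsto (fun n : ℕ => Real.exp 2 / (n : ℝ)) atTop (nhds 0) :=
      tendsto_const_div_atTop_nhds_zero_nat _
    have h2 : Tendsto (fun n : ℕ => (n : ℝ) ^ 2 * θ ^ n) atTop (nhds 0) :=
      tendsto_pow_const_mul_const_pow_of_lt_one 2 hθ0.le hθ1
    have h3 : Tendsto (fun n : ℕ => (n : ℝ) ^ 2 * (θ ^ n / ν ^ 2)) atTop (nhds 0) := by
      have := h2.div_const (ν ^ 2)
      simpa [mul_div_assoc] using this
    have h4 := ((h1.const_mul 2).add h3).const_sub 1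
    simpa using h4
  have hδ' := ENNReal.tendsto_ofReal hδ
  rw [ENNReal.ofReal_one] at hδ'
  refine tendsto_of_tendsto_of_tendsto_of_le_of_le' hδ' tendsto_const_nhds ?_ ?_
  · filter_upwards [hev] with n hn
    obtain ⟨s, l, t, N, hall⟩ := hn
    have := er_isProb n p
    have hb := hgood n s hall.1 hall.2.1 hall.2.2.2.2.2.1
    have hc : {ω : EdgeType n → Bool | ¬ (Rp (graphOf ω) β s ∧ Rp (graphOf ω)ᶜ β s ∧
        Codeg (graphOf ω) β)} = {ω | Rp (graphOf ω) β s ∧ Rp (graphOf ω)ᶜ β s ∧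
        Codeg (graphOf ω) β}ᶜ := by
      ext ω
      simp
    rw [hc, probReal_compl_eq_one_sub (Set.toFinite _).measurableSet] at hb
    calc ENNReal.ofReal (1 - (2 * (Real.exp 2 / n) + (n : ℝ) ^ 2 * (θ ^ n / ν ^ 2)))
        ≤ ENNReal.ofReal ((erMeasure n p).real {ω | Rp (graphOf ω) β s ∧ Rp (graphOf ω)ᶜ β s ∧
          Codeg (graphOf ω) β}) := ENNReal.ofReal_le_ofReal (by linarith)
      _ = erMeasure n p {ω | Rp (graphOf ω) β s ∧ Rp (graphOf ω)ᶜ β s ∧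
          Codeg (graphOf ω) β} := ofReal_measureReal
      _ ≤ _ := by
        apply measure_mono
        intro ω hω
        rw [Set.mem_ofPred_eq] at hω ⊢
        exact final_pt _ hβ hβ1 hm hω.1 hω.2.1 hω.2.2 hall
  · filter_upwards with n
    have := er_isProb n p
    exact prob_le_one
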